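/- Fix an integer k ≥ 1 and suppose ρ : ℝ → (0,1) satisfies Φ_{(1)}(ρ(x)) = x for all sufficiently large x. Then, as x → ∞, Φ(ρ(x)) = k · ( ((k+1)/k) · ζ((k+1)/k) · Γ((k+1)/k) · x^{1/k} / log x )^{k/(k+1)} · ( 1 − (k/(k+1)) · (log log x)/(log x) + O(1/log x) ). -/

import Mathlib

/-!
Put `ρ = exp(-Y^{-k})`, so that `Φ_{(m)}(ρ) = Y^{km} ∑_j j^{-1} ∑_p w(p / Y_j)`, where
`w(u) = u^{km} exp(-u^k)` and `Y_j = Y j^{-1/k}`. The prime number theorem for smoothed sums, with a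
saving of one logarithm, gives (`Phim_asymp`)
`Φ_{(m)}(ρ) = Y^{km+1} / log Y * (ζ(1 + 1/k) ∫_0^∞ w + O(1 / log Y))`,
and the integrals for `m = 0` and `m = 1` are `Γ(1 + 1/k)` and `Γ(1 + 1/k) / k`. Taking logarithms in
`Φ_{(1)}(ρ(x)) = x` gives `log x = (k + 1) log Y - log log Y + const + O(1 / log Y)`. Inverting this
relation (`exp_asymp`) and inserting it in the formula for `Φ_{(0)}` proves the claim.

The smoothed prime number theorem (`smooth_pnt`) is proved by Fourier analysis. The function
`ζ₁(s) = (s - 1) ζ(s)` and its first two derivatives are bounded polynomially in `1 + |Im s|` near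
`Re s = 1`, and the `3-4-1` inequality gives a polynomial lower bound for `|ζ₁|` on `1 ≤ Re s ≤ 2`;
hence `-ζ₁'/ζ₁` and its derivative grow polynomially there (`zlog_bounds`). In the variable `log u`
the function `u P(u) exp(-u^k)` (`P` a polynomial) is a Schwartz function `g`, and the error term in
the smoothed sum of `Λ` is the Fourier transform at `log Y` of `-ζ₁'/ζ₁` times the Fourier transform
of `g` (`explicit_formula`). One integration by parts shows that it is `O(1 / log Y)` relative to `Y`.

The passage from `Λ` to the primes (`smooth_pnt_primes`) uses the Chebyshev bounds
`π(x) = O(x / log x)` and `ψ(x) - θ(x) = O(√x)`, which are carried over to smoothed sums by a dyadic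
decomposition (`dyadic`).
-/

open Filter

/-- `Φ_{(m)}(ρ) = (ρ d/dρ)^m Φ(ρ) = ∑_{j≥1} ∑_p j^{m-1} p^{km} ρ^{j p^k}`.
    For `m = 0` this is `Φ(ρ)` itself. -/
noncomputable def Phim (k m : ℕ) (ρ : ℝ) : ℝ :=
  ∑' (j : ℕ+) (p : Nat.Primes),
    (j : ℝ) ^ ((m : ℤ) - 1) * ((p : ℕ) : ℝ) ^ (k * m) * ρ ^ ((j : ℕ) * (p : ℕ) ^ k)

noncomputable def zetaR (s : ℝ) : ℝ := (riemannZeta (s : ℂ)).re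

/-! ### Bounds for the zeta function near the line `Re s = 1` -/

section

open Complex MeasureTheory Set Topology

/-- The fractional part, cut off to `t > 1`; its Mellin transform at `-s` is
`∫_1^∞ {t} t^{-s-1} dt`. -/
noncomputable def fractCut (t : ℝ) : ℂ := (Ioi (1 : ℝ)).indicator (fun t => ((Int.fract t : ℝ) : ℂ)) t

lemma measurable_fractCut : Measurable fractCut := by
  unfold fractCut
  exact (Complex.measurable_ofReal.comp measurable_fract).indicator measurableSet_Ioi

lemma norm_fractCut_le (t : ℝ) : ‖fractCut t‖ ≤ 1 := by
  unfold fractCut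
  by_cases h : t ∈ Ioi (1 : ℝ)
  · rw [indicator_of_mem h, Complex.norm_real, Real.norm_eq_abs, abs_of_nonneg (Int.fract_nonneg t)]
    exact (Int.fract_lt_one t).le
  · rw [indicator_of_notMem h]; simp

lemma differentiableAt_mellin_fractCut {s : ℂ} (hs : s.re < 0) :
    DifferentiableAt ℂ (mellin fractCut) s := by
  refine mellin_differentiableAt_of_isBigO_rpow (a := 0) (b := s.re - 1) ?_ ?_ (by linarith) ?_
    (by linarith)
  · refine LocallyIntegrable.locallyIntegrableOn ?_ _
    refine (locallyIntegrable_const (1 : ℝ)).mono measurable_fractCut.aestronglyMeasurable ?_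
    exact Eventually.of_forall fun t => by simpa using norm_fractCut_le t
  · refine Asymptotics.IsBigO.of_bound 1 (Eventually.of_forall fun t => ?_)
    simpa using norm_fractCut_le t
  · refine Asymptotics.IsBigO.of_bound 1 ?_
    have : ∀ᶠ t : ℝ in 𝓝[>] 0, t < 1 := nhdsWithin_le_nhds (eventually_lt_nhds zero_lt_one)
    filter_upwards [this] with t ht
    have : fractCut t = 0 := by
      unfold fractCut
      exact indicator_of_notMem (by simpa using ht.le) _
    rw [this]; simp

lemma mellin_fractCut_eq (s : ℂ) :
    mellin fractCut (-s) = ∫ t in Ioi (1 : ℝ), ((Int.fract t : ℝ) : ℂ) * (t : ℂ) ^ (-(s + 1)) := by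
  unfold mellin
  have : ∀ t : ℝ, (t : ℂ) ^ (-s - 1) • fractCut t =
      (Ioi (1 : ℝ)).indicator
        (fun t : ℝ => ((Int.fract t : ℝ) : ℂ) * (t : ℂ) ^ (-(s + 1))) t := by
    intro t
    unfold fractCut
    by_cases h : t ∈ Ioi (1 : ℝ)
    · rw [indicator_of_mem h, indicator_of_mem h, smul_eq_mul, mul_comm]; ring_nf
    · rw [indicator_of_notMem h, indicator_of_notMem h, smul_zero]
  simp_rw [this]
  rw [setIntegral_indicator measurableSet_Ioi]
  congr 2
  ext t; simp

lemma norm_mellin_fractCut_le {s : ℂ} (hs : 1 / 2 ≤ s.re) : ‖mellin fractCut (-s)‖ ≤ 2 := by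
  rw [mellin_fractCut_eq]
  have hlt : -(s.re + 1) < -1 := by linarith
  have h1 : ‖∫ t in Ioi (1 : ℝ), ((Int.fract t : ℝ) : ℂ) * (t : ℂ) ^ (-(s + 1))‖ ≤
      ∫ t in Ioi (1 : ℝ), t ^ (-(s.re + 1)) := by
    refine norm_integral_le_of_norm_le (integrableOn_Ioi_rpow_of_lt hlt zero_lt_one) ?_
    filter_upwards [ae_restrict_mem measurableSet_Ioi] with t ht
    have ht0 : (0 : ℝ) < t := zero_lt_one.trans ht
    rw [norm_mul, Complex.norm_real, Real.norm_eq_abs, abs_of_nonneg (Int.fract_nonneg t),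
      Complex.norm_cpow_eq_rpow_re_of_pos ht0]
    have : (-(s + 1)).re = -(s.re + 1) := by simp
    rw [this]
    exact mul_le_of_le_one_left (Real.rpow_nonneg ht0.le _) (Int.fract_lt_one t).le
  refine h1.trans ?_
  rw [integral_Ioi_rpow_of_lt hlt zero_lt_one]
  simp only [Real.one_rpow]
  rw [show -(s.re + 1) + 1 = - s.re by ring, neg_div_neg_eq, div_le_iff₀ (by linarith)]
  linarith

/-- `ζ(s) = s ∫_1^∞ ⌊t⌋ t^{-s-1} dt`, with `⌊t⌋ = t - {t}`, multiplied by `s - 1`. -/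
lemma zeta1_eq_of_one_lt {s : ℂ} (hs : 1 < s.re) :
    riemannZeta₁ s = s - s * (s - 1) * mellin fractCut (-s) := by
  have hs1 : s ≠ 1 := by rintro rfl; simp at hs
  have hs0 : s - 1 ≠ 0 := sub_ne_zero.mpr hs1
  have hz : riemannZeta s = s * ∫ t in Ioi (1 : ℝ), ((⌊t⌋₊ : ℝ) : ℂ) * (t : ℂ) ^ (-(s + 1)) := by
    rw [← LSeries_one_eq_riemannZeta hs]
    rw [LSeries_eq_mul_integral (r := 1) _ zero_le_one hs (LSeriesSummable_one_iff.mpr hs)]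
    · simp
    · refine Asymptotics.IsBigO.of_bound 1 (Eventually.of_forall fun n => by simp)
  have hint1 : IntegrableOn (fun t : ℝ => (t : ℂ) ^ (-s)) (Ioi 1) :=
    integrableOn_Ioi_cpow_of_lt (by simpa using hs) zero_lt_one
  have hint2 : IntegrableOn (fun t : ℝ => ((Int.fract t : ℝ) : ℂ) * (t : ℂ) ^ (-(s + 1))) (Ioi 1) := by
    have h0 : IntegrableOn (fun t : ℝ => (t : ℂ) ^ (-(s + 1))) (Ioi 1) :=
      integrableOn_Ioi_cpow_of_lt (by simp; linarith) zero_lt_one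
    refine Integrable.bdd_mul (c := 1) h0
      (Complex.measurable_ofReal.comp measurable_fract).aestronglyMeasurable ?_
    refine Eventually.of_forall fun t => ?_
    simp only [Complex.norm_real, Real.norm_eq_abs, abs_of_nonneg (Int.fract_nonneg t)]
    exact (Int.fract_lt_one t).le
  have hsplit : ∫ t in Ioi (1 : ℝ), ((⌊t⌋₊ : ℝ) : ℂ) * (t : ℂ) ^ (-(s + 1)) =
      (∫ t in Ioi (1 : ℝ), (t : ℂ) ^ (-s)) - mellin fractCut (-s) := by
    rw [mellin_fractCut_eq, ← integral_sub hint1 hint2]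
    refine setIntegral_congr_fun measurableSet_Ioi fun t ht => ?_
    have ht0 : (0 : ℝ) < t := zero_lt_one.trans ht
    have e : (t : ℂ) ^ (-s) = (t : ℂ) * (t : ℂ) ^ (-(s + 1)) := by
      rw [show -s = 1 + (-(s + 1)) by ring,
        Complex.cpow_add _ _ (by exact_mod_cast ht0.ne'), Complex.cpow_one]
    have hf : (⌊t⌋₊ : ℝ) = t - Int.fract t := by
      rw [natCast_floor_eq_intCast_floor ht0.le]; linarith [Int.floor_add_fract t]
    rw [e, hf]; push_cast; ring
  have hI : ∫ t in Ioi (1 : ℝ), (t : ℂ) ^ (-s) = 1 / (s - 1) := by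
    rw [integral_Ioi_cpow_of_lt (by simpa using hs) zero_lt_one]
    simp only [Complex.ofReal_one, Complex.one_cpow]
    rw [show -s + 1 = -(s - 1) by ring, neg_div_neg_eq]
  rw [hsplit, hI] at hz
  have := riemannZeta_eq_inv_sub_mul hs1
  rw [hz] at this
  field_simp at this ⊢
  linear_combination -this

/-- The formula of `zeta1_eq_of_one_lt` on `Re s > 0`, by analytic continuation. -/
lemma zeta1_eq {s : ℂ} (hs : 0 < s.re) :
    riemannZeta₁ s = s - s * (s - 1) * mellin fractCut (-s) := by
  have hopen : IsOpen {z : ℂ | 0 < z.re} := isOpen_lt continuous_const Complex.continuous_re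
  have hconv : Convex ℝ {z : ℂ | 0 < z.re} := convex_halfSpace_re_gt 0
  have h1 : AnalyticOnNhd ℂ riemannZeta₁ {z : ℂ | 0 < z.re} :=
    differentiable_riemannZeta₁.differentiableOn.analyticOnNhd hopen
  have h2 : AnalyticOnNhd ℂ (fun s => s - s * (s - 1) * mellin fractCut (-s))
      {z : ℂ | 0 < z.re} := by
    refine DifferentiableOn.analyticOnNhd (fun z hz => ?_) hopen
    have hz' : (-z).re < 0 := by simpa using hz
    have : DifferentiableAt ℂ (fun s => mellin fractCut (-s)) z :=
      DifferentiableAt.comp (g := mellin fractCut) (f := fun s => -s) z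
        (differentiableAt_mellin_fractCut hz') differentiableAt_id.neg
    refine DifferentiableAt.differentiableWithinAt ?_
    fun_prop
  refine h1.eqOn_of_preconnected_of_eventuallyEq h2 hconv.isPreconnected
    (show (2 : ℂ) ∈ {z : ℂ | 0 < z.re} by simp) ?_ hs
  have : ∀ᶠ z : ℂ in 𝓝 2, 1 < z.re :=
    (isOpen_lt continuous_const Complex.continuous_re).mem_nhds (by simp)
  filter_upwards [this] with z hz using zeta1_eq_of_one_lt hz

/-- `1 + |Im s|`, the quantity in which all growth on vertical strips is measured. -/
noncomputable def ht (s : ℂ) : ℝ := 1 + |s.im|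

lemma one_le_ht (s : ℂ) : 1 ≤ ht s := by unfold ht; linarith [abs_nonneg s.im]

lemma norm_le_ht {s : ℂ} (h1 : 0 ≤ s.re) (h2 : s.re ≤ 4) : ‖s‖ ≤ 4 * ht s := by
  have := Complex.norm_le_abs_re_add_abs_im s
  rw [abs_of_nonneg h1] at this
  unfold ht; linarith [abs_nonneg s.im]

lemma norm_zeta1_le {s : ℂ} (h1 : 1 / 2 ≤ s.re) (h2 : s.re ≤ 4) :
    ‖riemannZeta₁ s‖ ≤ 44 * ht s ^ 2 := by
  rw [zeta1_eq (by linarith)]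
  have hn := norm_le_ht (by linarith) h2
  have h1' := one_le_ht s
  have hn1 : ‖s - 1‖ ≤ 5 * ht s := (norm_sub_le _ _).trans (by rw [norm_one]; linarith)
  have hm := norm_mellin_fractCut_le h1
  calc ‖s - s * (s - 1) * mellin fractCut (-s)‖ ≤ ‖s‖ + ‖s‖ * ‖s - 1‖ * ‖mellin fractCut (-s)‖ := by
        refine (norm_sub_le _ _).trans ?_
        rw [norm_mul, norm_mul]
    _ ≤ 4 * ht s + 4 * ht s * (5 * ht s) * 2 := by gcongr
    _ ≤ 44 * ht s ^ 2 := by nlinarith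

lemma ht_le_of_mem_sphere {s z : ℂ} (hz : ‖z - s‖ = 1 / 4) : ht z ≤ 2 * ht s := by
  have h := Complex.abs_im_le_norm (z - s)
  rw [hz, Complex.sub_im] at h
  have := abs_sub_abs_le_abs_sub z.im s.im
  unfold ht; linarith [abs_nonneg s.im]

lemma re_mem_of_mem_sphere {s z : ℂ} (hz : ‖z - s‖ = 1 / 4) :
    s.re - 1 / 4 ≤ z.re ∧ z.re ≤ s.re + 1 / 4 := by
  have h := Complex.abs_re_le_norm (z - s)
  rw [hz, Complex.sub_re, abs_le] at h
  constructor <;> linarith [h.1, h.2]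

/-- Cauchy's estimate on a circle of radius `1/4`. -/
lemma norm_deriv_zeta1_le {s : ℂ} (h1 : 3 / 4 ≤ s.re) (h2 : s.re ≤ 3) :
    ‖deriv riemannZeta₁ s‖ ≤ 704 * ht s ^ 2 := by
  have := Complex.norm_deriv_le_of_forall_mem_sphere_norm_le (f := riemannZeta₁) (c := s) (R := 1 / 4)
    (C := 176 * ht s ^ 2) (by norm_num) differentiable_riemannZeta₁.diffContOnCl ?_
  · refine this.trans (le_of_eq (by ring))
  · intro z hz
    rw [mem_sphere_iff_norm] at hz
    obtain ⟨h3, h4⟩ := re_mem_of_mem_sphere hz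
    refine (norm_zeta1_le (by linarith) (by linarith)).trans ?_
    have := ht_le_of_mem_sphere hz
    have h0 := one_le_ht z
    nlinarith

lemma norm_deriv2_zeta1_le {s : ℂ} (h1 : 1 ≤ s.re) (h2 : s.re ≤ 2) :
    ‖deriv (deriv riemannZeta₁) s‖ ≤ 11264 * ht s ^ 2 := by
  have := Complex.norm_deriv_le_of_forall_mem_sphere_norm_le (f := deriv riemannZeta₁) (c := s)
    (R := 1 / 4) (C := 2816 * ht s ^ 2) (by norm_num)
    differentiable_riemannZeta₁.deriv.diffContOnCl ?_
  · refine this.trans (le_of_eq (by ring))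
  · intro z hz
    rw [mem_sphere_iff_norm] at hz
    obtain ⟨h3, h4⟩ := re_mem_of_mem_sphere hz
    refine (norm_deriv_zeta1_le (by linarith) (by linarith)).trans ?_
    have := ht_le_of_mem_sphere hz
    have h0 := one_le_ht z
    nlinarith

lemma zeta1_ne_zero {s : ℂ} (hs : 1 ≤ s.re) : riemannZeta₁ s ≠ 0 := by
  by_cases h : s = 1
  · rw [h, riemannZeta₁_one]; exact one_ne_zero
  · have := riemannZeta_ne_zero_of_one_le_re hs
    rw [riemannZeta_eq_inv_sub_mul h] at this
    exact right_ne_zero_of_mul this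

/-- The `3-4-1` inequality for `(s-1)ζ(s)`. -/
lemma zeta1_product {x : ℝ} (hx : 0 < x) (y : ℝ) (hy : 1 ≤ |y|) :
    x ^ 3 ≤ ‖riemannZeta₁ (1 + x)‖ ^ 3 * ‖riemannZeta₁ (1 + x + I * y)‖ ^ 4 *
      ‖riemannZeta₁ (1 + x + 2 * I * y)‖ := by
  have h := DirichletCharacter.norm_LFunction_product_ge_one (N := 1) (χ := 1) hx y
  rw [one_pow] at h
  simp only [DirichletCharacter.LFunctionTrivChar, DirichletCharacter.LFunction_modOne_eq] at h
  have hre : ∀ z : ℂ, z.re = 0 → (1 : ℂ) + x + z ≠ 1 := by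
    intro z hz h
    have := congrArg Complex.re h
    simp [hz] at this; linarith
  have n1 : (1 : ℂ) + x ≠ 1 := by simpa using hre 0 (by simp)
  have n2 := hre (I * y) (by simp)
  have n3 := hre (2 * I * y) (by simp)
  rw [riemannZeta_eq_inv_sub_mul n1, riemannZeta_eq_inv_sub_mul n2,
    riemannZeta_eq_inv_sub_mul n3] at h
  simp only [norm_mul, norm_pow, norm_inv] at h
  have a1 : ‖(1 : ℂ) + x - 1‖ = x := by
    rw [add_sub_cancel_left, Complex.norm_real, Real.norm_eq_abs, abs_of_pos hx]
  have a2 : 1 ≤ ‖(1 : ℂ) + x + I * y - 1‖ := by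
    refine le_trans ?_ (Complex.abs_im_le_norm _)
    simpa using hy
  have a3 : 1 ≤ ‖(1 : ℂ) + x + 2 * I * y - 1‖ := by
    refine le_trans ?_ (Complex.abs_im_le_norm _)
    simp [abs_mul]; linarith
  rw [a1] at h
  set A := ‖riemannZeta₁ (1 + x)‖
  set B := ‖riemannZeta₁ (1 + x + I * y)‖
  set D := ‖riemannZeta₁ (1 + x + 2 * I * y)‖
  have b2 := inv_le_one_of_one_le₀ a2
  have b3 := inv_le_one_of_one_le₀ a3
  have hA : 0 ≤ A := norm_nonneg _
  have hB : 0 ≤ B := norm_nonneg _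
  have hD : 0 ≤ D := norm_nonneg _
  have : (1 : ℝ) ≤ (x⁻¹ * A) ^ 3 * (1 * B) ^ 4 * (1 * D) := by
    refine le_trans h ?_
    gcongr
  rw [mul_pow, inv_pow] at this
  have hx3 : 0 < x ^ 3 := by positivity
  calc x ^ 3 = x ^ 3 * 1 := by ring
    _ ≤ x ^ 3 * ((x ^ 3)⁻¹ * A ^ 3 * (1 * B) ^ 4 * (1 * D)) := by gcongr
    _ = A ^ 3 * B ^ 4 * D := by field_simp

lemma zeta1_fourth_power_bound {x : ℝ} (hx : 0 < x) (hx1 : x ≤ 1) (y : ℝ) (hy : 1 ≤ |y|) :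
    x ^ 3 ≤ (74 * (1 + |y|) * ‖riemannZeta₁ (1 + x + I * y)‖) ^ 4 := by
  have h := zeta1_product hx y hy
  have h1 : ‖riemannZeta₁ (1 + x)‖ ≤ 44 := by
    refine (norm_zeta1_le (by simp; linarith) (by simp; linarith)).trans ?_
    simp [ht]
  have h2 : ‖riemannZeta₁ (1 + x + 2 * I * y)‖ ≤ 176 * (1 + |y|) ^ 2 := by
    refine (norm_zeta1_le (by simp; linarith) (by simp; linarith)).trans ?_
    simp only [ht]
    have : |((1 : ℂ) + x + 2 * I * y).im| = 2 * |y| := by simp [abs_mul]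
    rw [this]
    nlinarith [abs_nonneg y]
  set a := ‖riemannZeta₁ (1 + x + I * y)‖
  have ha : 0 ≤ a := norm_nonneg _
  have hT : 1 ≤ 1 + |y| := by linarith [abs_nonneg y]
  calc x ^ 3 ≤ 44 ^ 3 * a ^ 4 * (176 * (1 + |y|) ^ 2) := by
        refine h.trans ?_
        gcongr
    _ ≤ 44 ^ 3 * a ^ 4 * (176 * (1 + |y|) ^ 4) := by
        gcongr; norm_num [hT]
    _ ≤ (74 * (1 + |y|) * a) ^ 4 := by
        have : 0 ≤ a ^ 4 * (1 + |y|) ^ 4 := by positivity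
        nlinarith

/-- Polynomial lower bound at height at least one. Closer to the line `Re s = 1` than `ε⁴ T⁻¹²`,
where `ε = 1/104192` and `T = 1 + |y|`, the value is compared by the mean value theorem with the one
at that distance, where the `3-4-1` inequality is effective. -/
lemma zeta1_lower_high {x : ℝ} (hx : 0 ≤ x) (hx1 : x ≤ 1) (y : ℝ) (hy : 1 ≤ |y|) :
    ((1 : ℝ) / 104192) ^ 3 / 148 ≤ ‖riemannZeta₁ (1 + x + I * y)‖ * (1 + |y|) ^ 10 := by
  set T := 1 + |y| with hTdef
  have hT : 1 ≤ T := by linarith [abs_nonneg y]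
  have hT0 : 0 < T := by linarith
  -- `104192 = 148 * 704` makes the mean value error equal to half of the main term
  set ε : ℝ := 1 / 104192 with hε
  have hε0 : 0 < ε := by norm_num [hε]
  set x0 : ℝ := (ε / T ^ 3) ^ 4 with hx0
  have hx0p : 0 < x0 := by positivity
  have hq : ε / T ^ 3 ≤ 1 := by
    rw [div_le_one (by positivity)]
    exact le_trans (by norm_num [hε]) (one_le_pow₀ hT)
  have hx01 : x0 ≤ 1 := pow_le_one₀ (by positivity) hq
  have key : ∀ x : ℝ, x0 ≤ x → x ≤ 1 →
      ε ^ 3 / 74 ≤ ‖riemannZeta₁ (1 + x + I * y)‖ * T ^ 10 := by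
    intro x h1 h2
    have h := zeta1_fourth_power_bound (hx0p.trans_le h1) h2 y hy
    have h3 : ((ε / T ^ 3) ^ 3) ^ 4 ≤ (74 * T * ‖riemannZeta₁ (1 + x + I * y)‖) ^ 4 := by
      refine le_trans ?_ h
      calc ((ε / T ^ 3) ^ 3) ^ 4 = x0 ^ 3 := by rw [hx0]; ring
        _ ≤ x ^ 3 := by gcongr
    have h4 := le_of_pow_le_pow_left₀ (by norm_num) (by positivity) h3
    rw [div_pow, div_le_iff₀ (by positivity)] at h4
    rw [div_le_iff₀ (by norm_num)]
    calc ε ^ 3 ≤ _ := h4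
      _ = _ := by ring
  rcases le_total x0 x with h | h
  · refine le_trans ?_ (key x h hx1)
    gcongr
    norm_num
  · have hd : ‖riemannZeta₁ (1 + x0 + I * y) - riemannZeta₁ (1 + x + I * y)‖ ≤
        704 * T ^ 2 * ‖((1 : ℂ) + x0 + I * y) - (1 + x + I * y)‖ := by
      have hc : Convex ℝ ({z : ℂ | 1 ≤ z.re} ∩ {z : ℂ | z.re ≤ 2} ∩ {z : ℂ | z.im = y}) := by
        refine ((convex_halfSpace_re_ge 1).inter (convex_halfSpace_re_le 2)).inter ?_
        exact convex_hyperplane (IsLinearMap.mk Complex.add_im (by simp)) _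
      refine hc.norm_image_sub_le_of_norm_deriv_le (𝕜 := ℂ)
        (fun z _ => differentiable_riemannZeta₁ z) ?_ ?_ ?_
      · rintro z ⟨⟨hz1, hz2⟩, hz3⟩
        simp only [mem_ofPred_eq] at hz1 hz2 hz3
        have := norm_deriv_zeta1_le (s := z) (by linarith) (by linarith)
        rwa [ht, hz3] at this
      · refine ⟨⟨?_, ?_⟩, ?_⟩ <;> simp <;> linarith
      · refine ⟨⟨?_, ?_⟩, ?_⟩ <;> simp <;> linarith
    have hdist : ‖((1 : ℂ) + x0 + I * y) - (1 + x + I * y)‖ ≤ x0 := by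
      have : ((1 : ℂ) + x0 + I * y) - (1 + x + I * y) = ((x0 - x : ℝ) : ℂ) := by
        push_cast; ring
      rw [this, Complex.norm_real, Real.norm_eq_abs, abs_of_nonneg (by linarith)]
      linarith
    have h5 := key x0 le_rfl hx01
    have h6 : ‖riemannZeta₁ (1 + x0 + I * y)‖ ≤ ‖riemannZeta₁ (1 + x + I * y)‖ + 704 * T ^ 2 * x0 := by
      have := norm_le_norm_add_norm_sub (riemannZeta₁ (1 + x + I * y)) (riemannZeta₁ (1 + x0 + I * y))
      rw [norm_sub_rev] at this
      refine this.trans ?_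
      gcongr
      exact hd.trans (by gcongr)
    have h7 : 704 * T ^ 2 * x0 * T ^ 10 = ε ^ 3 / 148 := by
      rw [hx0, hε]; field_simp; norm_num
    have h8 : ‖riemannZeta₁ (1 + x0 + I * y)‖ * T ^ 10 ≤
        (‖riemannZeta₁ (1 + x + I * y)‖ + 704 * T ^ 2 * x0) * T ^ 10 := by gcongr
    rw [add_mul, h7] at h8
    linarith

/-- At height at most one the lower bound comes from compactness and the non-vanishing of `ζ` on
`Re s ≥ 1`. -/
lemma zeta1_lower : ∃ c : ℝ, 0 < c ∧ ∀ s : ℂ, 1 ≤ s.re → s.re ≤ 2 →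
    c ≤ ‖riemannZeta₁ s‖ * ht s ^ 10 := by
  have hK : IsCompact (Icc (1 : ℝ) 2 ×ℂ Icc (-1 : ℝ) 1) := isCompact_Icc.reProdIm isCompact_Icc
  have hne : (Icc (1 : ℝ) 2 ×ℂ Icc (-1 : ℝ) 1).Nonempty :=
    ⟨1, by simp [Complex.mem_reProdIm]⟩
  obtain ⟨z0, hz0, hmin⟩ := hK.exists_isMinOn hne
    differentiable_riemannZeta₁.continuous.norm.continuousOn
  have hz0' : 0 < ‖riemannZeta₁ z0‖ := norm_pos_iff.mpr (zeta1_ne_zero hz0.1.1)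
  refine ⟨min ‖riemannZeta₁ z0‖ (((1 : ℝ) / 104192) ^ 3 / 148), lt_min hz0' (by norm_num), ?_⟩
  intro s h1 h2
  rcases le_total |s.im| 1 with h | h
  · refine (min_le_left _ _).trans ?_
    have : ‖riemannZeta₁ z0‖ ≤ ‖riemannZeta₁ s‖ :=
      hmin (show s ∈ _ from ⟨⟨h1, h2⟩, abs_le.mp h⟩)
    exact this.trans (le_mul_of_one_le_right (norm_nonneg _) (one_le_pow₀ (one_le_ht s)))
  · refine (min_le_right _ _).trans ?_
    have := zeta1_lower_high (x := s.re - 1) (by linarith) (by linarith) s.im h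
    have e : (1 : ℂ) + ((s.re - 1 : ℝ) : ℂ) + I * s.im = s := by
      apply Complex.ext <;> simp
    rwa [e] at this

/-- `-ζ₁'/ζ₁`, where `ζ₁(s) = (s-1)ζ(s)`; on `Re s > 1` this is `-ζ'(s)/ζ(s) - 1/(s-1)`. -/
noncomputable def zlog (s : ℂ) : ℂ := -(deriv riemannZeta₁ s / riemannZeta₁ s)

lemma hasDerivAt_zlog {s : ℂ} (h : 1 ≤ s.re) :
    HasDerivAt zlog (-((deriv (deriv riemannZeta₁) s * riemannZeta₁ s -
      deriv riemannZeta₁ s * deriv riemannZeta₁ s) / riemannZeta₁ s ^ 2)) s :=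
  ((differentiable_riemannZeta₁.deriv s).hasDerivAt.div
    (differentiable_riemannZeta₁ s).hasDerivAt (zeta1_ne_zero h)).neg

/-- `zlog` and its derivative grow at most polynomially up to the line `Re s = 1`. -/
lemma zlog_bounds : ∃ C : ℝ, 0 < C ∧ ∀ s : ℂ, 1 ≤ s.re → s.re ≤ 2 →
    ‖zlog s‖ ≤ C * ht s ^ 24 ∧ ‖deriv zlog s‖ ≤ C * ht s ^ 24 := by
  obtain ⟨c, hc, hlow⟩ := zeta1_lower
  refine ⟨704 / c + (11264 * 44 + 704 ^ 2) / c ^ 2, by positivity, fun s h1 h2 => ?_⟩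
  have hT := one_le_ht s
  have hT0 : 0 < ht s := by linarith
  have hz : 0 < ‖riemannZeta₁ s‖ := norm_pos_iff.mpr (zeta1_ne_zero h1)
  have hinv : ‖riemannZeta₁ s‖⁻¹ ≤ ht s ^ 10 / c := by
    rw [inv_le_comm₀ hz (by positivity), inv_div, div_le_iff₀ (by positivity)]
    exact hlow s h1 h2
  have b0 := norm_zeta1_le (s := s) (by linarith) (by linarith)
  have b1 := norm_deriv_zeta1_le (s := s) (by linarith) (by linarith)
  have b2 := norm_deriv2_zeta1_le h1 h2
  constructor
  · unfold zlog
    rw [norm_neg, norm_div, div_eq_mul_inv]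
    calc _ ≤ 704 * ht s ^ 2 * (ht s ^ 10 / c) := by gcongr
      _ = 704 / c * ht s ^ 12 := by ring
      _ ≤ 704 / c * ht s ^ 24 := by gcongr; norm_num [hT]
      _ ≤ _ := by gcongr; exact le_add_of_nonneg_right (by positivity)
  · rw [(hasDerivAt_zlog h1).deriv, norm_neg, norm_div, norm_pow, div_eq_mul_inv, ← inv_pow]
    calc _ ≤ (11264 * ht s ^ 2 * (44 * ht s ^ 2) + 704 * ht s ^ 2 * (704 * ht s ^ 2)) *
          (ht s ^ 10 / c) ^ 2 := by
          gcongr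
          refine (norm_sub_le _ _).trans ?_
          rw [norm_mul, norm_mul]
          gcongr
      _ = (11264 * 44 + 704 ^ 2) / c ^ 2 * ht s ^ 24 := by ring
      _ ≤ _ := by gcongr; exact le_add_of_nonneg_left (by positivity)

open ArithmeticFunction in
lemma LSeries_vonMangoldt_eq_zlog {s : ℂ} (hs : 1 < s.re) :
    LSeries (fun n => (vonMangoldt n : ℂ)) s = zlog s + 1 / (s - 1) := by
  have hs1 : s ≠ 1 := by rintro rfl; simp at hs
  have hs0 : s - 1 ≠ 0 := sub_ne_zero.mpr hs1
  have hz := zeta1_ne_zero hs.le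
  rw [LSeries_vonMangoldt_eq_deriv_riemannZeta_div hs]
  have hd : HasDerivAt riemannZeta
      (-((s - 1) ^ 2)⁻¹ * riemannZeta₁ s + (s - 1)⁻¹ * deriv riemannZeta₁ s) s := by
    have h1 : HasDerivAt (fun z : ℂ => (z - 1)⁻¹ * riemannZeta₁ z)
      (-((s - 1) ^ 2)⁻¹ * riemannZeta₁ s + (s - 1)⁻¹ * deriv riemannZeta₁ s) s := by
      have h2 : HasDerivAt (fun z : ℂ => (z - 1)⁻¹) (-1 / (s - 1) ^ 2) s :=
        ((hasDerivAt_id' s).sub_const 1).fun_inv hs0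
      refine (h2.fun_mul (differentiable_riemannZeta₁ s).hasDerivAt).congr_deriv ?_
      rw [neg_div, one_div]
    refine h1.congr_of_eventuallyEq ?_
    filter_upwards [isOpen_ne.mem_nhds hs1] with z hz using riemannZeta_eq_inv_sub_mul hz
  rw [hd.deriv, riemannZeta_eq_inv_sub_mul hs1, zlog]
  field_simp
  ring

end

/-! ### The kernels `P(u) exp(-u^k)` -/

section

open Complex MeasureTheory Set Topology Polynomial
open scoped SchwartzMap ContDiff

/-- The kernel `P(u) exp(-u^k)`. -/
noncomputable def wker (k : ℕ) (P : ℝ[X]) (u : ℝ) : ℝ := P.eval u * Real.exp (-u ^ k)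

/-- The kernel in logarithmic coordinates, `e^v P(e^v) exp(-e^{kv})`. -/
noncomputable def gker (k : ℕ) (P : ℝ[X]) (v : ℝ) : ℝ := Real.exp v * wker k P (Real.exp v)

lemma pow_mul_exp_neg_le {k : ℕ} (hk : 1 ≤ k) (D : ℕ) {u : ℝ} (hu : 0 ≤ u) :
    u ^ D * Real.exp (-u ^ k) ≤ D.factorial := by
  have hD : (1 : ℝ) ≤ D.factorial := by exact_mod_cast Nat.one_le_iff_ne_zero.mpr (Nat.factorial_ne_zero D)
  rcases le_total u 1 with h | h
  · calc u ^ D * Real.exp (-u ^ k) ≤ 1 * 1 := by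
          gcongr
          · exact pow_le_one₀ hu h
          · rw [Real.exp_le_one_iff]; linarith [pow_nonneg hu k]
      _ ≤ _ := by linarith
  · have h1 : u ≤ u ^ k := le_self_pow₀ h (by omega)
    have h2 := Real.pow_div_factorial_le_exp u hu D
    rw [div_le_iff₀ (by positivity)] at h2
    calc u ^ D * Real.exp (-u ^ k) ≤ (Real.exp u * D.factorial) * Real.exp (-u) := by gcongr
      _ = D.factorial * (Real.exp u * Real.exp (-u)) := by ring
      _ = D.factorial := by rw [← Real.exp_add]; simp

lemma wker_bdd {k : ℕ} (hk : 1 ≤ k) (P : ℝ[X]) : ∃ C, 0 ≤ C ∧ ∀ u, 0 ≤ u → |wker k P u| ≤ C := by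
  induction P using Polynomial.induction_on' with
  | add p q hp hq =>
    obtain ⟨C1, h1, h1'⟩ := hp
    obtain ⟨C2, h2, h2'⟩ := hq
    refine ⟨C1 + C2, by positivity, fun u hu => ?_⟩
    have : wker k (p + q) u = wker k p u + wker k q u := by simp [wker, add_mul]
    rw [this]
    exact (abs_add_le _ _).trans (add_le_add (h1' u hu) (h2' u hu))
  | monomial n a =>
    refine ⟨|a| * n.factorial, by positivity, fun u hu => ?_⟩
    have : wker k (monomial n a) u = a * (u ^ n * Real.exp (-u ^ k)) := by simp [wker, mul_assoc]
    rw [this, abs_mul, abs_of_nonneg (a := u ^ n * _) (by positivity)]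
    gcongr
    exact pow_mul_exp_neg_le hk n hu

/-- The differential operator on polynomials which corresponds to differentiating `gker`. -/
noncomputable def dker (k : ℕ) (P : ℝ[X]) : ℝ[X] := P + X * derivative P - C (k : ℝ) * X ^ k * P

lemma hasDerivAt_gker {k : ℕ} (hk : 1 ≤ k) (P : ℝ[X]) (v : ℝ) :
    HasDerivAt (gker k P) (gker k (dker k P) v) v := by
  have he := Real.hasDerivAt_exp v
  have h1 : HasDerivAt (fun v => P.eval (Real.exp v)) ((derivative P).eval (Real.exp v) * Real.exp v) v :=
    (P.hasDerivAt (Real.exp v)).comp v he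
  have h2 : HasDerivAt (fun v => Real.exp (-(Real.exp v) ^ k))
      (Real.exp (-(Real.exp v) ^ k) * (-(k * Real.exp v ^ (k - 1) * Real.exp v))) v :=
    (he.pow k).fun_neg.exp
  refine (he.fun_mul (h1.fun_mul h2)).congr_deriv ?_
  have : Real.exp v ^ k = Real.exp v ^ (k - 1) * Real.exp v := by
    rw [← pow_succ]; congr 1; omega
  simp only [gker, wker, dker, eval_add, eval_sub, eval_mul, eval_X, eval_C, eval_pow, this]
  ring

lemma gker_decay {k : ℕ} (hk : 1 ≤ k) (P : ℝ[X]) (N : ℕ) : ∃ C, ∀ v, |v| ^ N * |gker k P v| ≤ C := by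
  obtain ⟨C, hC, h⟩ := wker_bdd hk ((X ^ 2 + 1) * P)
  refine ⟨N.factorial * C, fun v => ?_⟩
  have h1 := Real.pow_div_factorial_le_exp |v| (abs_nonneg v) N
  have h2 : Real.exp |v| ≤ Real.exp v + Real.exp (-v) := by
    rcases abs_cases v with ⟨h, _⟩ | ⟨h, _⟩ <;> rw [h] <;>
      linarith [Real.exp_pos v, Real.exp_pos (-v)]
  rw [div_le_iff₀ (by positivity)] at h1
  have h3 := h (Real.exp v) (Real.exp_pos v).le
  have e1 : Real.exp (-v) * Real.exp v = 1 := by rw [← Real.exp_add]; simp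
  calc |v| ^ N * |gker k P v| ≤ ((Real.exp v + Real.exp (-v)) * N.factorial) * |gker k P v| := by
        gcongr; exact h1.trans (by gcongr)
    _ = N.factorial * |wker k ((X ^ 2 + 1) * P) (Real.exp v)| := by
        have : wker k ((X ^ 2 + 1) * P) (Real.exp v) =
          (Real.exp v ^ 2 + 1) * wker k P (Real.exp v) := by simp [wker, mul_assoc]
        rw [this, gker, abs_mul, abs_mul, abs_of_pos (Real.exp_pos v),
          abs_of_pos (a := Real.exp v ^ 2 + 1) (by positivity)]
        linear_combination (N.factorial : ℝ) * |wker k P (Real.exp v)| * e1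
    _ ≤ N.factorial * C := by gcongr

lemma iteratedDeriv_gker {k : ℕ} (hk : 1 ≤ k) (n : ℕ) (P : ℝ[X]) :
    iteratedDeriv n (fun v => (gker k P v : ℂ)) = fun v => (gker k ((dker k)^[n] P) v : ℂ) := by
  induction n generalizing P with
  | zero => simp
  | succ n ih =>
    have : deriv (fun v => (gker k P v : ℂ)) = fun v => (gker k (dker k P) v : ℂ) := by
      ext v
      exact (hasDerivAt_gker hk P v).ofReal_comp.deriv
    rw [iteratedDeriv_succ', this, ih, Function.iterate_succ_apply]

/-- The function `gker k P`, as a complex-valued Schwartz function. -/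
noncomputable def skern (k : ℕ) (hk : 1 ≤ k) (P : ℝ[X]) : 𝓢(ℝ, ℂ) where
  toFun v := (gker k P v : ℂ)
  smooth' := by
    refine Complex.ofRealCLM.contDiff.comp ?_
    show ContDiff ℝ ∞ (fun v => Real.exp v * (P.eval (Real.exp v) * Real.exp (-Real.exp v ^ k)))
    have : ContDiff ℝ ∞ (fun u : ℝ => P.eval u) := by
      simpa using Polynomial.contDiff_aeval (R := ℝ) (𝕜 := ℝ) P ∞
    have h2 : ContDiff ℝ ∞ Real.exp := Real.contDiff_exp
    exact h2.mul ((this.comp h2).mul (h2.comp (h2.pow k).neg))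
  decay' N n := by
    obtain ⟨C, hC⟩ := gker_decay hk ((dker k)^[n] P) N
    refine ⟨C, fun v => ?_⟩
    rw [norm_iteratedFDeriv_eq_norm_iteratedDeriv, iteratedDeriv_gker hk]
    simpa using hC v

lemma skern_apply (k : ℕ) (hk : 1 ≤ k) (P : ℝ[X]) (v : ℝ) : skern k hk P v = (gker k P v : ℂ) := rfl

end

/-! ### The smoothed prime number theorem for the von Mangoldt function -/

section

open Complex MeasureTheory Set Topology Polynomial ArithmeticFunction
open scoped SchwartzMap ContDiff FourierTransform

/-- The point `σ - 2πit`. -/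
noncomputable def vline (σ t : ℝ) : ℂ := σ - 2 * Real.pi * I * t

@[simp] lemma vline_re (σ t : ℝ) : (vline σ t).re = σ := by simp [vline]
@[simp] lemma vline_im (σ t : ℝ) : (vline σ t).im = -(2 * Real.pi * t) := by simp [vline]

lemma ht_vline_le (σ t : ℝ) : ht (vline σ t) ≤ 7 * (1 + |t|) := by
  rw [ht, vline_im, abs_neg, abs_mul, abs_of_pos (by positivity)]
  nlinarith [Real.pi_lt_d2, abs_nonneg t]

lemma schwartz_inversion (g : 𝓢(ℝ, ℂ)) (v : ℝ) :
    g v = ∫ t : ℝ, Complex.exp (2 * Real.pi * I * t * v) * (𝓕 g) t := by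
  have h : 𝓕⁻ (𝓕 g) = g := FourierTransform.fourierInv_fourier_eq g
  have h2 : (𝓕⁻ (𝓕 g)) v = ∫ t : ℝ, Complex.exp (2 * Real.pi * I * t * v) * (𝓕 g) t := by
    rw [SchwartzMap.fourierInv_coe, Real.fourierInv_eq']
    congr 1; ext t
    rw [smul_eq_mul]
    congr 2
    simp; ring
  rw [← h2, h]

lemma norm_exp_two_pi (t v : ℝ) : ‖Complex.exp (2 * Real.pi * I * t * v)‖ = 1 := by
  have : 2 * Real.pi * I * t * v = ((2 * Real.pi * t * v : ℝ) : ℂ) * I := by push_cast; ring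
  rw [this, Complex.norm_exp_ofReal_mul_I]

/-- The Dirichlet series of `Λ`, weighted by a Schwartz function of `log n`, obtained by Fourier
inversion and interchange of sum and integral. -/
lemma LSeries_sum_eq (g : 𝓢(ℝ, ℂ)) {σ : ℝ} (hσ : 1 < σ) (y : ℝ) :
    HasSum (fun n : ℕ => (vonMangoldt n : ℂ) * (n : ℂ) ^ (-(σ : ℂ)) * g (Real.log n - y))
      (∫ t : ℝ, LSeries (fun n => (vonMangoldt n : ℂ)) (vline σ t) *
        (Complex.exp (-(2 * Real.pi * I * t * y)) * (𝓕 g) t)) := by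
  set F : ℕ → ℝ → ℂ := fun n t => LSeries.term (fun n => (vonMangoldt n : ℂ)) (vline σ t) n *
        (Complex.exp (-(2 * Real.pi * I * t * y)) * (𝓕 g) t) with hF
  have hsig : LSeriesSummable (fun n => (vonMangoldt n : ℂ)) (σ : ℂ) :=
    LSeriesSummable_vonMangoldt (by simpa using hσ)
  have hnorm : ∀ n t, ‖F n t‖ = ‖LSeries.term (fun n => (vonMangoldt n : ℂ)) σ n‖ * ‖(𝓕 g) t‖ := by
    intro n t
    rw [hF]
    simp only [norm_mul]
    have : ‖Complex.exp (-(2 * Real.pi * I * t * y))‖ = 1 := by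
      have := norm_exp_two_pi t (-y)
      rw [← this]; congr 2; push_cast; ring
    rw [this, one_mul, LSeries.norm_term_eq, LSeries.norm_term_eq]
    simp
  have hval : ∀ n t, F n t = ((vonMangoldt n : ℂ) * (n : ℂ) ^ (-(σ : ℂ))) *
      (Complex.exp (2 * Real.pi * I * t * ((Real.log n - y : ℝ) : ℂ)) * (𝓕 g) t) := by
    intro n t
    rcases Nat.eq_zero_or_pos n with rfl | hn
    · simp [hF]
    have hn0 : (n : ℂ) ≠ 0 := by exact_mod_cast hn.ne'
    rw [hF]
    simp only [LSeries.term_of_ne_zero hn.ne']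
    rw [div_eq_mul_inv, ← Complex.cpow_neg]
    have : (n : ℂ) ^ (-vline σ t) * Complex.exp (-(2 * Real.pi * I * t * y)) =
      (n : ℂ) ^ (-(σ : ℂ)) * Complex.exp (2 * Real.pi * I * t * ((Real.log n - y : ℝ) : ℂ)) := by
      rw [Complex.cpow_def_of_ne_zero hn0, Complex.cpow_def_of_ne_zero hn0, ← Complex.exp_add,
        ← Complex.exp_add]
      congr 1
      rw [vline]; push_cast
      ring
    linear_combination (vonMangoldt n : ℂ) * (𝓕 g) t * this
  have hcont : ∀ v : ℝ, Continuous fun t : ℝ => Complex.exp (2 * Real.pi * I * t * v) := by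
    intro v; fun_prop
  have hFint : ∀ n, Integrable (F n) := by
    intro n
    refine Integrable.mono' (((𝓕 g).integrable (μ := volume)).norm.const_mul
      ‖LSeries.term (fun n => (vonMangoldt n : ℂ)) σ n‖) ?_ ?_
    · have : F n = fun t : ℝ => ((vonMangoldt n : ℂ) * (n : ℂ) ^ (-(σ : ℂ))) *
        (Complex.exp (2 * Real.pi * I * t * ((Real.log n - y : ℝ) : ℂ)) * (𝓕 g) t) := by
        ext t; exact hval n t
      rw [this]
      exact (continuous_const.mul ((hcont _).mul (𝓕 g).continuous)).aestronglyMeasurable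
    · exact Eventually.of_forall fun t => (hnorm n t).le
  have hsum : Summable fun n => ∫ t, ‖F n t‖ := by
    simp_rw [hnorm, integral_const_mul]
    exact (hsig.norm).mul_right _
  have := hasSum_integral_of_summable_integral_norm hFint hsum
  have e1 : (fun n => ∫ t, F n t) =
      fun n : ℕ => (vonMangoldt n : ℂ) * (n : ℂ) ^ (-(σ : ℂ)) * g (Real.log n - y) := by
    ext n
    simp_rw [hval, integral_const_mul]
    rw [schwartz_inversion g]
  have e2 : ∫ t, ∑' n, F n t = ∫ t : ℝ, LSeries (fun n => (vonMangoldt n : ℂ)) (vline σ t) *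
        (Complex.exp (-(2 * Real.pi * I * t * y)) * (𝓕 g) t) := by
    refine integral_congr_ae (Eventually.of_forall fun t => ?_)
    simp only [hF, LSeries]
    rw [tsum_mul_right]
  rwa [e1, e2] at this

/-- The counterpart of `LSeries_sum_eq` in which `Λ` is replaced by its mean value `1`; it accounts
for the pole of `-ζ'/ζ` at `1`. -/
lemma laplace_eq (g : 𝓢(ℝ, ℂ)) {σ : ℝ} (hσ : 1 < σ) (y : ℝ) :
    ∫ r in Ioi (0 : ℝ), Complex.exp (-((σ : ℂ) - 1) * r) * g (r - y) =
      ∫ t : ℝ, (1 / (vline σ t - 1)) * (Complex.exp (-(2 * Real.pi * I * t * y)) * (𝓕 g) t) := by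
  have h1 : ∀ r : ℝ, Complex.exp (-((σ : ℂ) - 1) * r) * g (r - y) =
      ∫ t : ℝ, Complex.exp (-((σ : ℂ) - 1) * r) *
        (Complex.exp (2 * Real.pi * I * t * ((r - y : ℝ) : ℂ)) * (𝓕 g) t) := by
    intro r; rw [integral_const_mul, ← schwartz_inversion g]
  simp_rw [h1]
  rw [integral_integral_swap]
  · congr 1; ext t
    have h2 : ∀ r : ℝ, Complex.exp (-((σ : ℂ) - 1) * r) *
        (Complex.exp (2 * Real.pi * I * t * ((r - y : ℝ) : ℂ)) * (𝓕 g) t) =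
        Complex.exp (-(vline σ t - 1) * r) *
          (Complex.exp (-(2 * Real.pi * I * t * y)) * (𝓕 g) t) := by
      intro r
      rw [← mul_assoc, ← mul_assoc, ← Complex.exp_add, ← Complex.exp_add]
      congr 2
      rw [vline]; push_cast; ring
    simp_rw [h2]
    rw [integral_mul_const]
    congr 1
    rw [integral_exp_mul_complex_Ioi (by simp; linarith)]
    simp only [ofReal_zero, mul_zero, Complex.exp_zero]
    rw [neg_div, ← div_neg, neg_neg]
  · have hexp : Integrable (fun r : ℝ => Real.exp (-(σ - 1) * r)) (volume.restrict (Ioi 0)) :=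
      integrableOn_exp_mul_Ioi (by linarith) 0
    have := hexp.mul_prod ((𝓕 g).integrable (μ := volume)).norm
    refine this.mono' ?_ ?_
    · refine Continuous.aestronglyMeasurable ?_
      have := (𝓕 g).continuous
      fun_prop
    · refine Eventually.of_forall fun z => ?_
      simp only [Function.uncurry, norm_mul]
      rw [norm_exp_two_pi, one_mul, Complex.norm_exp]
      simp

/-- The sum over `n` minus its expected value is the Fourier transform of the product of
`𝓕 g` with the regularised logarithmic derivative of zeta on a vertical line. -/
lemma explicit_formula (g : 𝓢(ℝ, ℂ)) {σ : ℝ} (hσ : 1 < σ) (y : ℝ)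
    (hi : Integrable fun t : ℝ => (𝓕 g) t * zlog (vline σ t)) :
    (∑' n : ℕ, (vonMangoldt n : ℂ) * (n : ℂ) ^ (-(σ : ℂ)) * g (Real.log n - y)) -
      ∫ r in Ioi (0 : ℝ), Complex.exp (-((σ : ℂ) - 1) * r) * g (r - y) =
    𝓕 (fun t : ℝ => (𝓕 g) t * zlog (vline σ t)) y := by
  have hs : ∀ t, 1 < (vline σ t).re := by intro t; simpa using hσ
  have he : ∀ t : ℝ, ‖Complex.exp (-(2 * Real.pi * I * t * y))‖ = 1 := by
    intro t
    have := norm_exp_two_pi t (-y)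
    rw [← this]; congr 2; push_cast; ring
  have hne : ∀ t, vline σ t - 1 ≠ 0 := by
    intro t h
    have := congrArg Complex.re h
    simp at this; linarith
  have i1 : Integrable fun t : ℝ => zlog (vline σ t) *
      (Complex.exp (-(2 * Real.pi * I * t * y)) * (𝓕 g) t) := by
    have : (fun t : ℝ => zlog (vline σ t) * (Complex.exp (-(2 * Real.pi * I * t * y)) * (𝓕 g) t)) =
      fun t : ℝ => Complex.exp (-(2 * Real.pi * I * t * y)) * ((𝓕 g) t * zlog (vline σ t)) := by
      ext t; ring
    rw [this]
    refine hi.bdd_mul (c := 1) (Continuous.aestronglyMeasurable (by fun_prop))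
      (Eventually.of_forall fun t => (he t).le)
  have i2 : Integrable fun t : ℝ => (1 / (vline σ t - 1)) *
      (Complex.exp (-(2 * Real.pi * I * t * y)) * (𝓕 g) t) := by
    have i0 : Integrable fun t : ℝ => Complex.exp (-(2 * Real.pi * I * t * y)) * (𝓕 g) t :=
      ((𝓕 g).integrable (μ := volume)).bdd_mul (c := 1)
        (Continuous.aestronglyMeasurable (by fun_prop)) (Eventually.of_forall fun t => (he t).le)
    refine i0.bdd_mul (c := 1 / (σ - 1)) ?_ (Eventually.of_forall fun t => ?_)
    · refine Continuous.aestronglyMeasurable ?_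
      refine continuous_const.div (by unfold vline; fun_prop) hne
    · rw [norm_div, norm_one]
      refine one_div_le_one_div_of_le (by linarith) ?_
      refine le_trans ?_ (Complex.re_le_norm _)
      simp
  rw [(LSeries_sum_eq g hσ y).tsum_eq, laplace_eq g hσ y, Real.fourier_real_eq_integral_exp_smul]
  have : ∀ t, LSeries (fun n => (vonMangoldt n : ℂ)) (vline σ t) *
        (Complex.exp (-(2 * Real.pi * I * t * y)) * (𝓕 g) t) =
      zlog (vline σ t) * (Complex.exp (-(2 * Real.pi * I * t * y)) * (𝓕 g) t) +
      (1 / (vline σ t - 1)) * (Complex.exp (-(2 * Real.pi * I * t * y)) * (𝓕 g) t) := by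
    intro t; rw [LSeries_vonMangoldt_eq_zlog (hs t)]; ring
  simp_rw [this]
  rw [integral_add i1 i2, add_sub_cancel_right]
  congr 1; ext t
  rw [smul_eq_mul]
  have : Complex.exp (-(2 * Real.pi * I * t * y)) = Complex.exp (↑(-2 * Real.pi * t * y) * I) := by
    congr 1; push_cast; ring
  rw [this]; ring

lemma integrable_weight (h : 𝓢(ℝ, ℂ)) : Integrable fun t : ℝ => (1 + |t|) ^ 24 * ‖h t‖ := by
  have h1 := (h.integrable_pow_mul volume 24)
  have h0 := (h.integrable (μ := volume)).norm
  refine ((h0.add h1).const_mul (2 ^ 23)).mono' ?_ (Eventually.of_forall fun t => ?_)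
  · have := h.continuous
    exact Continuous.aestronglyMeasurable (by fun_prop)
  · have := add_pow_le (zero_le_one' ℝ) (abs_nonneg t) 24
    rw [Real.norm_of_nonneg (by positivity)]
    calc (1 + |t|) ^ 24 * ‖h t‖ ≤ (2 ^ 23 * (1 ^ 24 + |t| ^ 24)) * ‖h t‖ := by gcongr
      _ = 2 ^ 23 * (‖h t‖ + ‖t‖ ^ 24 * ‖h t‖) := by rw [Real.norm_eq_abs]; ring

lemma hasDerivAt_vline (σ t : ℝ) : HasDerivAt (vline σ) (-(2 * Real.pi * I)) t := by
  have h := (((hasDerivAt_id (t : ℂ)).const_mul (2 * (Real.pi : ℂ) * I)).const_sub (σ : ℂ)).comp_ofReal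
  have e : vline σ = fun y : ℝ => (σ : ℂ) - 2 * Real.pi * I * id (y : ℂ) := rfl
  rw [e]; simpa only [mul_one] using h

lemma norm_fourier_le (f : ℝ → ℂ) (y : ℝ) : ‖𝓕 f y‖ ≤ ∫ t, ‖f t‖ :=
  VectorFourier.norm_fourierIntegral_le_integral_norm _ _ _ _ _

/-- Since `zlog` and its derivative are polynomially bounded uniformly in `1 < σ ≤ 2`, one
integration by parts gives decay of the Fourier transform, uniformly in `σ`. -/
lemma fourier_bound (g : 𝓢(ℝ, ℂ)) : ∃ C, ∀ σ : ℝ, 1 < σ → σ ≤ 2 →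
    (Integrable fun t : ℝ => (𝓕 g) t * zlog (vline σ t)) ∧
    ∀ y, ‖𝓕 (fun t : ℝ => (𝓕 g) t * zlog (vline σ t)) y‖ * (1 + |y|) ≤ C := by
  obtain ⟨A, hA, hz⟩ := zlog_bounds
  set h : 𝓢(ℝ, ℂ) := 𝓕 g with hh
  set h' : 𝓢(ℝ, ℂ) := SchwartzMap.derivCLM ℂ ℂ h with hh'
  set B : ℝ → ℝ := fun t => A * 7 ^ 24 * (7 * ((1 + |t|) ^ 24 * ‖h t‖) + (1 + |t|) ^ 24 * ‖h' t‖)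
    with hB
  have hBi : Integrable B :=
    (((integrable_weight h).const_mul 7).add (integrable_weight h')).const_mul _
  refine ⟨2 * ∫ t, B t, fun σ h1 h2 => ?_⟩
  set f : ℝ → ℂ := fun t => h t * zlog (vline σ t) with hf
  have hd : ∀ t, HasDerivAt f (h' t * zlog (vline σ t) +
      h t * (deriv zlog (vline σ t) * (-(2 * Real.pi * I)))) t := by
    intro t
    have a1 : HasDerivAt h (h' t) t := by
      have := (h.differentiableAt (x := t)).hasDerivAt
      simpa [hh'] using this
    have a2 : HasDerivAt zlog (deriv zlog (vline σ t)) (vline σ t) :=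
      (hasDerivAt_zlog (s := vline σ t) (by simpa using h1.le)).differentiableAt.hasDerivAt
    exact a1.mul (a2.comp_of_eq t (hasDerivAt_vline σ t) rfl)
  have hzb : ∀ t, ‖zlog (vline σ t)‖ ≤ A * 7 ^ 24 * (1 + |t|) ^ 24 ∧
      ‖deriv zlog (vline σ t)‖ ≤ A * 7 ^ 24 * (1 + |t|) ^ 24 := by
    intro t
    obtain ⟨b1, b2⟩ := hz (vline σ t) (by simpa using h1.le) (by simpa using h2)
    have : A * ht (vline σ t) ^ 24 ≤ A * 7 ^ 24 * (1 + |t|) ^ 24 := by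
      rw [mul_assoc, ← mul_pow]
      gcongr
      · linarith [one_le_ht (vline σ t)]
      · exact ht_vline_le σ t
    exact ⟨b1.trans this, b2.trans this⟩
  have hfB : ∀ t, ‖f t‖ ≤ B t := by
    intro t
    rw [hf, hB]; simp only [norm_mul]
    have := mul_le_mul_of_nonneg_left (hzb t).1 (norm_nonneg (h t))
    have p1 : 0 ≤ A * 7 ^ 24 * (1 + |t|) ^ 24 * ‖h t‖ := by positivity
    have p2 : 0 ≤ A * 7 ^ 24 * (1 + |t|) ^ 24 * ‖h' t‖ := by positivity
    linarith
  have hdB : ∀ t, ‖deriv f t‖ ≤ B t := by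
    intro t
    rw [(hd t).deriv]
    refine (norm_add_le _ _).trans ?_
    have b1 := mul_le_mul_of_nonneg_left (hzb t).1 (norm_nonneg (h' t))
    have b2 := mul_le_mul_of_nonneg_left (hzb t).2 (norm_nonneg (h t))
    have : ‖(-(2 * Real.pi * I) : ℂ)‖ ≤ 7 := by
      simp only [norm_neg, norm_mul, Complex.norm_I, mul_one, Complex.norm_real, Real.norm_eq_abs,
        abs_of_pos Real.pi_pos]
      norm_num; linarith [Real.pi_lt_d2]
    rw [norm_mul, norm_mul, norm_mul]
    have b3 : ‖h t‖ * (‖deriv zlog (vline σ t)‖ * ‖(-(2 * Real.pi * I) : ℂ)‖) ≤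
      (‖h t‖ * (A * 7 ^ 24 * (1 + |t|) ^ 24)) * 7 := by
      rw [← mul_assoc]; gcongr
    rw [hB]; simp only; linarith
  have hdiff : Differentiable ℝ f := fun t => (hd t).differentiableAt
  have hfi : Integrable f := hBi.mono' hdiff.continuous.aestronglyMeasurable
    (Eventually.of_forall hfB)
  have hfi' : Integrable (deriv f) := hBi.mono' (aestronglyMeasurable_deriv f _)
    (Eventually.of_forall hdB)
  refine ⟨hfi, fun y => ?_⟩
  have c1 : ‖𝓕 f y‖ ≤ ∫ t, B t := by
    refine (norm_fourier_le f y).trans ?_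
    exact integral_mono hfi.norm hBi hfB
  have c2 : ‖𝓕 (deriv f) y‖ ≤ ∫ t, B t := by
    refine (norm_fourier_le _ y).trans ?_
    exact integral_mono hfi'.norm hBi hdB
  rw [Real.fourier_deriv hfi hdiff hfi'] at c2
  simp only [smul_eq_mul, norm_mul, Complex.norm_I, mul_one, Complex.norm_real, Real.norm_eq_abs,
        abs_of_pos Real.pi_pos] at c2
  norm_num at c2
  have : |y| * ‖𝓕 f y‖ ≤ 2 * Real.pi * |y| * ‖𝓕 f y‖ := by
    gcongr
    nlinarith [Real.pi_gt_three, abs_nonneg y]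
  nlinarith

lemma summable_vonMangoldt_sq : Summable fun n : ℕ => vonMangoldt n / (n : ℝ) ^ 2 := by
  have h := (LSeriesSummable_vonMangoldt (s := 2) (by norm_num)).norm
  refine h.congr fun n => ?_
  rw [LSeries.norm_term_eq]
  rcases Nat.eq_zero_or_pos n with rfl | hn
  · simp
  · rw [if_neg hn.ne', Complex.norm_real, Real.norm_of_nonneg vonMangoldt_nonneg]
    norm_num

/-- The limit `σ → 1` of `explicit_formula`. -/
lemma smoothed_limit (g : 𝓢(ℝ, ℂ)) {A : ℝ} (hg : ∀ v, ‖g v‖ ≤ A * Real.exp (-v)) :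
    ∃ C, ∀ y : ℝ, ‖(∑' n : ℕ, (vonMangoldt n : ℂ) * (n : ℂ)⁻¹ * g (Real.log n - y)) -
      ∫ r in Ioi (0 : ℝ), g (r - y)‖ * (1 + |y|) ≤ C := by
  obtain ⟨C, hC⟩ := fourier_bound g
  refine ⟨C, fun y => ?_⟩
  have hev : ∀ᶠ σ : ℝ in 𝓝[>] 1, 1 < σ ∧ σ ≤ 2 := by
    filter_upwards [self_mem_nhdsWithin, nhdsWithin_le_nhds (Iic_mem_nhds one_lt_two)] with σ h1 h2
    exact ⟨h1, h2⟩
  have hsig : Tendsto (fun σ : ℝ => (σ : ℂ)) (𝓝[>] 1) (𝓝 1) := by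
    have := Complex.continuous_ofReal.tendsto (1 : ℝ)
    simp only [Complex.ofReal_one] at this
    exact this.mono_left nhdsWithin_le_nhds
  have t1 : Tendsto (fun σ : ℝ =>
      ∑' n : ℕ, (vonMangoldt n : ℂ) * (n : ℂ) ^ (-(σ : ℂ)) * g (Real.log n - y)) (𝓝[>] 1)
      (𝓝 (∑' n : ℕ, (vonMangoldt n : ℂ) * (n : ℂ)⁻¹ * g (Real.log n - y))) := by
    refine tendsto_tsum_of_dominated_convergence
      (bound := fun n => (vonMangoldt n / (n : ℝ) ^ 2) * (A * Real.exp y))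
      (summable_vonMangoldt_sq.mul_right _) ?_ ?_
    · intro n
      rcases Nat.eq_zero_or_pos n with rfl | hn
      · simp
      have hn0 : (n : ℂ) ≠ 0 := by exact_mod_cast hn.ne'
      refine Tendsto.mul_const _ (Tendsto.const_mul _ ?_)
      rw [← Complex.cpow_neg_one]
      exact (Tendsto.const_cpow hsig.neg (Or.inl hn0))
    · filter_upwards [hev] with σ hσ n
      rcases Nat.eq_zero_or_pos n with rfl | hn
      · simp
      have hn1 : (1 : ℝ) ≤ n := by exact_mod_cast hn
      have hn0 : (0 : ℝ) < n := by linarith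
      rw [norm_mul, norm_mul, Complex.norm_real, Real.norm_of_nonneg vonMangoldt_nonneg,
        Complex.norm_natCast_cpow_of_pos hn]
      have e1 : (n : ℝ) ^ (-(σ : ℂ)).re ≤ (n : ℝ)⁻¹ := by
        rw [← Real.rpow_neg_one]
        exact Real.rpow_le_rpow_of_exponent_le hn1 (by simp; exact hσ.1.le)
      have e2 : ‖g (Real.log n - y)‖ ≤ (n : ℝ)⁻¹ * (A * Real.exp y) := by
        refine (hg _).trans (le_of_eq ?_)
        rw [neg_sub, Real.exp_sub, Real.exp_log hn0]; field_simp
      calc _ ≤ vonMangoldt n * (n : ℝ)⁻¹ * ((n : ℝ)⁻¹ * (A * Real.exp y)) := by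
            gcongr
        _ = _ := by field_simp
  have t2 : Tendsto (fun σ : ℝ =>
      ∫ r in Ioi (0 : ℝ), Complex.exp (-((σ : ℂ) - 1) * r) * g (r - y)) (𝓝[>] 1)
      (𝓝 (∫ r in Ioi (0 : ℝ), g (r - y))) := by
    have hgi : Integrable fun r : ℝ => g (r - y) :=
      (g.integrable (μ := volume)).comp_sub_right y
    have hgc := g.continuous
    refine tendsto_integral_filter_of_dominated_convergence (fun r => ‖g (r - y)‖) ?_ ?_
      hgi.norm.integrableOn ?_
    · exact Eventually.of_forall fun σ => Continuous.aestronglyMeasurable (by fun_prop)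
    · filter_upwards [hev] with σ hσ
      filter_upwards [ae_restrict_mem measurableSet_Ioi] with r hr
      rw [norm_mul, Complex.norm_exp]
      have : Real.exp (-((σ : ℂ) - 1) * r).re ≤ 1 := by
        rw [Real.exp_le_one_iff]
        simp only [neg_mul, neg_re, mul_re, sub_re, ofReal_re, one_re, sub_im, ofReal_im, one_im,
          sub_zero, mul_zero]
        have : 0 < r := hr
        nlinarith [hσ.1]
      nlinarith [norm_nonneg (g (r - y))]
    · refine Eventually.of_forall fun r => ?_
      have : Tendsto (fun σ : ℝ => Complex.exp (-((σ : ℂ) - 1) * r)) (𝓝[>] 1)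
          (𝓝 (Complex.exp (-((1 : ℂ) - 1) * r))) :=
        (Complex.continuous_exp.tendsto _).comp ((hsig.sub_const 1).neg.mul_const _)
      simpa using this.mul_const (g (r - y))
  refine le_of_tendsto (((t1.sub t2).norm).mul_const (1 + |y|)) ?_
  filter_upwards [hev] with σ hσ
  rw [explicit_formula g hσ.1 y (hC σ hσ.1 hσ.2).1]
  exact (hC σ hσ.1 hσ.2).2 y

/-- `1 + log⁺ Y`. -/
noncomputable def logp (Y : ℝ) : ℝ := 1 + max 0 (Real.log Y)

lemma one_le_logp (Y : ℝ) : 1 ≤ logp Y := by simp [logp]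
lemma logp_pos (Y : ℝ) : 0 < logp Y := by linarith [one_le_logp Y]

lemma skern_exp_bound {k : ℕ} (hk : 1 ≤ k) (P : ℝ[X]) :
    ∃ A, ∀ v, ‖skern k hk P v‖ ≤ A * Real.exp (-v) := by
  obtain ⟨C, hC, h⟩ := wker_bdd hk (X ^ 2 * P)
  refine ⟨C, fun v => ?_⟩
  have h1 := h (Real.exp v) (Real.exp_pos v).le
  have e : wker k (X ^ 2 * P) (Real.exp v) = Real.exp v * gker k P v := by
    simp [wker, gker]; ring
  rw [e, abs_mul, abs_of_pos (Real.exp_pos v)] at h1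
  rw [skern_apply, Complex.norm_real, Real.norm_eq_abs, Real.exp_neg]
  rw [← div_eq_mul_inv, le_div_iff₀ (Real.exp_pos v)]
  linarith

lemma wker_sq_bound {k : ℕ} (hk : 1 ≤ k) (P : ℝ[X]) :
    ∃ A, 0 ≤ A ∧ ∀ u, 0 ≤ u → |wker k P u| ≤ A * (1 + u ^ 2)⁻¹ := by
  obtain ⟨C, hC, h⟩ := wker_bdd hk ((1 + X ^ 2) * P)
  refine ⟨C, hC, fun u hu => ?_⟩
  have h1 := h u hu
  have e : wker k ((1 + X ^ 2) * P) u = (1 + u ^ 2) * wker k P u := by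
    simp [wker]; ring
  rw [e, abs_mul, abs_of_pos (by positivity)] at h1
  rw [← div_eq_mul_inv, le_div_iff₀ (by positivity)]
  linarith

lemma wker_continuous (k : ℕ) (P : ℝ[X]) : Continuous (wker k P) := by
  unfold wker; fun_prop

lemma wker_integrableOn {k : ℕ} (hk : 1 ≤ k) (P : ℝ[X]) : IntegrableOn (wker k P) (Ioi 0) := by
  obtain ⟨A, hA, h⟩ := wker_sq_bound hk P
  refine ((integrable_inv_one_add_sq.const_mul A).integrableOn (s := Ioi 0)).mono'
    (wker_continuous k P).aestronglyMeasurable ?_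
  filter_upwards [ae_restrict_mem measurableSet_Ioi] with u hu
  exact h u (le_of_lt hu)

lemma gker_integral (k : ℕ) (P : ℝ[X]) {Y : ℝ} (hY : 0 < Y) :
    ∫ r in Ioi (0 : ℝ), gker k P (r - Real.log Y) = ∫ u in Ioi (1 / Y), wker k P u := by
  have himg : (fun r => Real.exp (r - Real.log Y)) '' Ioi 0 = Ioi (1 / Y) := by
    ext u
    simp only [mem_image, mem_Ioi]
    constructor
    · rintro ⟨r, hr, rfl⟩
      rw [Real.exp_sub, Real.exp_log hY]
      gcongr
      exact Real.one_lt_exp_iff.mpr hr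
    · intro hu
      have hu0 : 0 < u := lt_trans (by positivity) hu
      refine ⟨Real.log (u * Y), ?_, ?_⟩
      · apply Real.log_pos; rwa [div_lt_iff₀ hY] at hu
      · rw [Real.log_mul hu0.ne' hY.ne', add_sub_cancel_right, Real.exp_log hu0]
  rw [← himg, integral_image_eq_integral_abs_deriv_smul measurableSet_Ioi
    (f' := fun r => Real.exp (r - Real.log Y))]
  · refine integral_congr_ae (Eventually.of_forall fun r => ?_)
    simp [gker]
  · intro r _
    have := ((hasDerivAt_id r).sub_const (Real.log Y)).exp
    simpa using this.hasDerivWithinAt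
  · intro a _ b _ hab
    simpa using hab

/-- Smoothed prime number theorem, with a saving of one logarithm. -/
lemma smooth_pnt {k : ℕ} (hk : 1 ≤ k) (P : ℝ[X]) : ∃ C, ∀ Y : ℝ, 0 < Y →
    |(∑' n : ℕ, vonMangoldt n * wker k P (n / Y)) - Y * ∫ u in Ioi 0, wker k P u| ≤
      C * (Y / logp Y) := by
  obtain ⟨A, hA⟩ := skern_exp_bound hk P
  obtain ⟨C, hC⟩ := smoothed_limit (skern k hk P) hA
  obtain ⟨B, hB, hw⟩ := wker_bdd hk P
  set J := ∫ u in Ioi 0, |wker k P u| with hJ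
  have hJ0 : 0 ≤ J := integral_nonneg fun u => abs_nonneg _
  have hwi := wker_integrableOn hk P
  refine ⟨C + (B + J), fun Y hY => ?_⟩
  have h1 := hC (Real.log Y)
  have e1 : (∑' n : ℕ, (vonMangoldt n : ℂ) * (n : ℂ)⁻¹ * skern k hk P (Real.log n - Real.log Y)) =
      (((∑' n : ℕ, vonMangoldt n * wker k P (n / Y)) / Y : ℝ) : ℂ) := by
    rw [← tsum_div_const, Complex.ofReal_tsum]
    congr 1; ext n
    rcases Nat.eq_zero_or_pos n with rfl | hn
    · simp
    have hn0 : (0 : ℝ) < n := by exact_mod_cast hn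
    rw [skern_apply, gker, Real.exp_sub, Real.exp_log hn0, Real.exp_log hY]
    push_cast
    have : (n : ℂ) ≠ 0 := by exact_mod_cast hn.ne'
    field_simp
  have e2 : ∫ r in Ioi (0 : ℝ), skern k hk P (r - Real.log Y) =
      ((∫ u in Ioi (1 / Y), wker k P u : ℝ) : ℂ) := by
    rw [← gker_integral k P hY]
    exact integral_ofReal (𝕜 := ℂ)
  rw [e1, e2, ← Complex.ofReal_sub, Complex.norm_real, Real.norm_eq_abs] at h1
  have h3 : |(∑' n : ℕ, vonMangoldt n * wker k P (n / Y)) / Y - ∫ u in Ioi (1 / Y), wker k P u| *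
      logp Y ≤ C := by
    refine le_trans ?_ h1
    gcongr
    rw [logp]; gcongr
    exact max_le (abs_nonneg _) (le_abs_self _)
  have h4 : |(∫ u in Ioi 0, wker k P u) - ∫ u in Ioi (1 / Y), wker k P u| * logp Y ≤ B + J := by
    have hsplit : (∫ u in Ioi 0, wker k P u) - ∫ u in Ioi (1 / Y), wker k P u =
        ∫ u in Ioc 0 (1 / Y), wker k P u := by
      have hY0 : (0 : ℝ) ≤ 1 / Y := by positivity
      rw [← Ioc_union_Ioi_eq_Ioi hY0, setIntegral_union (Ioc_disjoint_Ioi le_rfl) measurableSet_Ioi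
        (hwi.mono_set Ioc_subset_Ioi_self) (hwi.mono_set (Ioi_subset_Ioi hY0))]
      ring
    rw [hsplit]
    rcases le_total Y 1 with h | h
    · have : logp Y = 1 := by rw [logp, max_eq_left (Real.log_nonpos hY.le h), add_zero]
      rw [this, mul_one]
      have := (norm_integral_le_integral_norm (μ := volume.restrict (Ioc 0 (1 / Y))) (wker k P)).trans
        (setIntegral_mono_set hwi.norm (Eventually.of_forall fun u => norm_nonneg _)
          (Ioc_subset_Ioi_self).eventuallyLE)
      simp only [Real.norm_eq_abs] at this
      linarith
    · have hlp : logp Y ≤ Y := by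
        rw [logp, max_eq_right (Real.log_nonneg h)]
        linarith [Real.log_le_sub_one_of_pos hY]
      have := norm_setIntegral_le_of_norm_le_const (μ := volume) (s := Ioc 0 (1 / Y)) (f := wker k P)
        (C := B) (by simp) (fun u hu => by simpa using hw u hu.1.le)
      simp only [Real.norm_eq_abs, Measure.real, Real.volume_Ioc, sub_zero] at this
      rw [ENNReal.toReal_ofReal (by positivity)] at this
      calc _ ≤ (B * (1 / Y)) * Y := by
            gcongr
            exact (logp_pos Y).le
        _ = B := by field_simp
        _ ≤ _ := by linarith
  have h5 : |(∑' n : ℕ, vonMangoldt n * wker k P (n / Y)) - Y * ∫ u in Ioi 0, wker k P u| =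
      Y * |(∑' n : ℕ, vonMangoldt n * wker k P (n / Y)) / Y - ∫ u in Ioi 0, wker k P u| := by
    rw [← abs_of_pos hY, ← abs_mul, abs_of_pos hY]
    congr 1; field_simp
  rw [h5, mul_div_assoc', mul_comm Y, mul_div_assoc, mul_div_assoc', le_div_iff₀ (logp_pos Y)]
  have h6 : |(∑' n : ℕ, vonMangoldt n * wker k P (n / Y)) / Y - ∫ u in Ioi 0, wker k P u| * logp Y
      ≤ C + (B + J) := by
    have := abs_sub_le ((∑' n : ℕ, vonMangoldt n * wker k P (n / Y)) / Y)
      (∫ u in Ioi (1 / Y), wker k P u) (∫ u in Ioi 0, wker k P u)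
    rw [abs_sub_comm (∫ u in Ioi (1 / Y), wker k P u)] at this
    nlinarith [logp_pos Y]
  nlinarith

end

/-! ### Smoothed sums over primes -/

section

open MeasureTheory Set Topology Polynomial ArithmeticFunction

/-- Submultiplicativity of `logp`, used to change the scale in `Y / logp Y`. -/
lemma logp_mul_le {l Y : ℝ} (hl : 0 < l) (hY : 0 < Y) : logp Y ≤ logp (l * Y) * logp (1 / l) := by
  have h : max 0 (Real.log Y) ≤ max 0 (Real.log (l * Y)) + max 0 (Real.log (1 / l)) := by
    have e : Real.log Y = Real.log (l * Y) + Real.log (1 / l) := by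
      rw [← Real.log_mul (by positivity) (by positivity)]; congr 1; field_simp
    refine max_le (by positivity) ?_
    rw [e]; gcongr <;> exact le_max_right _ _
  have h1 : 0 ≤ max 0 (Real.log (l * Y)) := le_max_left _ _
  have h2 : 0 ≤ max 0 (Real.log (1 / l)) := le_max_left _ _
  unfold logp
  nlinarith [mul_nonneg h1 h2]

/-- If the partial sums of `a` are `O(x / log x)`, then so are its smoothed sums with respect
to any kernel with mild decay at `0` and at `∞`; a dyadic decomposition in powers of `4`. -/
lemma dyadic {a : ℕ → ℝ} (ha : ∀ n, 0 ≤ a n) (ha0 : a 0 = 0) {C : ℝ} (hC : 0 ≤ C)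
    (hA : ∀ x : ℝ, 0 < x → ∑ n ∈ Finset.range (⌊x⌋₊ + 1), a n ≤ C * (x / logp x))
    {K : ℝ} (hK : 0 ≤ K) : ∃ C', 0 ≤ C' ∧ ∀ V : ℝ → ℝ, (∀ u, 0 ≤ u → 0 ≤ V u) →
      (∀ u, 0 < u → V u * √u ≤ K) → (∀ u, 0 < u → V u * u ^ 2 ≤ K) → ∀ Y, 0 < Y →
      Summable (fun n : ℕ => a n * V (n / Y)) ∧
        ∑' n : ℕ, a n * V (n / Y) ≤ C' * (Y / logp Y) := by
  set b : ℤ → ℝ := fun i => 8 * K * ((1 + 2 * (i.natAbs : ℝ)) * (1 / 2) ^ i.natAbs) with hb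
  have hb0 : ∀ i, 0 ≤ b i := fun i => by positivity
  have hbs : Summable b := by
    have h0 : Summable fun n : ℕ => (1 + 2 * (n : ℝ)) * (1 / 2) ^ n := by
      have h1 := summable_pow_mul_geometric_of_norm_lt_one (R := ℝ) 1 (r := 1 / 2) (by norm_num)
      have h2 := summable_pow_mul_geometric_of_norm_lt_one (R := ℝ) 0 (r := 1 / 2) (by norm_num)
      refine (h2.add (h1.mul_left 2)).congr fun n => ?_
      simp; ring
    refine Summable.mul_left _ (Summable.of_nat_of_neg ?_ ?_) <;> simpa using h0
  refine ⟨C * ∑' i, b i, mul_nonneg hC (tsum_nonneg hb0), fun V hV0 hV1 hV2 Y hY => ?_⟩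
  have key : ∀ u : ℝ, 0 < u → ∃ i : ℤ, u ≤ 4 ^ (i + 1) ∧
      V u * ((4 : ℝ) ^ (i + 1) * logp (1 / 4 ^ (i + 1))) ≤ b i := by
    intro u hu
    obtain ⟨i, hi1, hi2⟩ := exists_mem_Ioc_zpow hu (y := (4 : ℝ)) (by norm_num)
    refine ⟨i, hi2, ?_⟩
    have hle : (4 : ℝ) ^ (i + 1) ≤ 4 * u := by
      rw [zpow_add_one₀ (by norm_num)]; linarith
    have hV := hV0 u hu.le
    rcases Int.eq_nat_or_neg i with ⟨l, rfl | rfl⟩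
    · have hl : logp (1 / (4 : ℝ) ^ ((l : ℤ) + 1)) = 1 := by
        rw [logp, max_eq_left, add_zero]
        apply Real.log_nonpos (by positivity)
        rw [div_le_one (by positivity)]
        exact one_le_zpow₀ (by norm_num) (by omega)
      rw [hl, mul_one]
      have hul : (2 : ℝ) ^ l ≤ u := by
        refine le_trans ?_ hi1.le
        rw [zpow_natCast]
        exact pow_le_pow_left₀ (by norm_num) (by norm_num) l
      have h1 : V u * u * 2 ^ l ≤ K := by
        refine le_trans ?_ (hV2 u hu)
        rw [sq, ← mul_assoc]; gcongr
      calc V u * (4 : ℝ) ^ ((l : ℤ) + 1) ≤ V u * (4 * u) := by gcongr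
        _ = 4 * (V u * u * 2 ^ l) * (1 / 2) ^ l := by
          rw [div_pow, one_pow]; field_simp
        _ ≤ 4 * K * (1 / 2) ^ l := by gcongr
        _ ≤ b l := by
          rw [hb]; simp only [Int.natAbs_natCast]
          have : 0 ≤ K * (1 / 2) ^ l := by positivity
          have h3 : 0 ≤ K * (1 / 2) ^ l * l := by positivity
          nlinarith
    · have hl : logp (1 / (4 : ℝ) ^ (-(l : ℤ) + 1)) ≤ 1 + 2 * l := by
        rw [logp]; gcongr
        refine max_le (by positivity) ?_
        rw [one_div, Real.log_inv, Real.log_zpow]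
        push_cast
        have h4 : Real.log 4 ≤ 2 := by
          have : Real.log 4 = 2 * Real.log 2 := by
            rw [show (4 : ℝ) = 2 ^ 2 by norm_num, Real.log_pow]; norm_num
          linarith [Real.log_two_lt_d9]
        have h5 : 0 ≤ Real.log 4 := Real.log_nonneg (by norm_num)
        nlinarith [(Nat.cast_nonneg l : (0 : ℝ) ≤ l)]
      have hsu : √u ≤ 2 * (1 / 2) ^ l := by
        rw [Real.sqrt_le_left (by positivity)]
        refine hi2.trans (le_of_eq ?_)
        rw [zpow_add_one₀ (by norm_num), zpow_neg, zpow_natCast, mul_pow, ← pow_mul, mul_comm l,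
          pow_mul]
        norm_num; rw [one_div, inv_pow]; ring
      have h1 : V u * u ≤ K * (2 * (1 / 2) ^ l) := by
        calc V u * u = V u * √u * √u := by rw [mul_assoc, Real.mul_self_sqrt hu.le]
          _ ≤ K * (2 * (1 / 2) ^ l) := by gcongr; exact hV1 u hu
      calc V u * ((4 : ℝ) ^ (-(l : ℤ) + 1) * logp (1 / 4 ^ (-(l : ℤ) + 1)))
          ≤ V u * ((4 * u) * (1 + 2 * l)) := by
            gcongr
            exact (logp_pos _).le
        _ = 4 * (V u * u) * (1 + 2 * l) := by ring
        _ ≤ 4 * (K * (2 * (1 / 2) ^ l)) * (1 + 2 * l) := by gcongr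
        _ = b (-l) := by
          rw [hb]; simp only [Int.natAbs_neg, Int.natAbs_natCast]; ring
  have key2 : ∀ n : ℕ, ∃ i : ℤ, (n : ℝ) ≤ 4 ^ (i + 1) * Y ∧
      a n * V (n / Y) ≤ a n * (b i / ((4 : ℝ) ^ (i + 1) * logp (1 / 4 ^ (i + 1)))) := by
    intro n
    rcases Nat.eq_zero_or_pos n with rfl | hn
    · exact ⟨0, by simp; positivity, by simp [ha0]⟩
    · obtain ⟨i, h1, h2⟩ := key (n / Y) (by positivity)
      refine ⟨i, by rwa [div_le_iff₀ hY] at h1, ?_⟩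
      gcongr
      · exact ha n
      · rw [le_div_iff₀ (mul_pos (by positivity) (logp_pos _))]; exact h2
  choose f hf1 hf2 using key2
  have hterm : ∀ n : ℕ, 0 ≤ a n * V (n / Y) := fun n => mul_nonneg (ha n) (hV0 _ (by positivity))
  have hfin : ∀ s : Finset ℕ, ∑ n ∈ s, a n * V (n / Y) ≤ C * (∑' i, b i) * (Y / logp Y) := by
    intro s
    rw [← Finset.sum_fiberwise_of_maps_to (t := s.image f) (g := f)
      (fun n hn => Finset.mem_image_of_mem f hn)]
    have hi : ∀ i ∈ s.image f, ∑ n ∈ s with f n = i, a n * V (n / Y) ≤ b i * (C * (Y / logp Y)) := by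
      intro i _
      set l : ℝ := 4 ^ (i + 1) with hl
      have hl0 : 0 < l := by positivity
      have hp := logp_pos (1 / l)
      calc ∑ n ∈ s with f n = i, a n * V (n / Y)
          ≤ ∑ n ∈ s with f n = i, a n * (b i / (l * logp (1 / l))) := by
            refine Finset.sum_le_sum fun n hn => ?_
            have := (Finset.mem_filter.mp hn).2
            have h2 := hf2 n
            rwa [this] at h2
        _ = (∑ n ∈ s with f n = i, a n) * (b i / (l * logp (1 / l))) := by rw [Finset.sum_mul]
        _ ≤ (∑ n ∈ Finset.range (⌊l * Y⌋₊ + 1), a n) * (b i / (l * logp (1 / l))) := by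
            have := hb0 i
            refine mul_le_mul_of_nonneg_right ?_ (by positivity)
            refine Finset.sum_le_sum_of_subset_of_nonneg ?_ (fun n _ _ => ha n)
            intro n hn
            have h1 := hf1 n
            rw [(Finset.mem_filter.mp hn).2] at h1
            rw [Finset.mem_range, Nat.lt_succ_iff]
            exact Nat.le_floor h1
        _ ≤ (C * (l * Y / logp (l * Y))) * (b i / (l * logp (1 / l))) := by
            have := hb0 i
            gcongr
            exact hA _ (by positivity)
        _ = b i * (C * (Y / (logp (l * Y) * logp (1 / l)))) := by
            have := logp_pos (l * Y)
            field_simp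
        _ ≤ b i * (C * (Y / logp Y)) := by
            have := hb0 i
            have := logp_pos Y
            gcongr
            exact logp_mul_le hl0 hY
    refine (Finset.sum_le_sum hi).trans ?_
    rw [← Finset.sum_mul]
    have h1 := hbs.sum_le_tsum (s.image f) (fun i _ => hb0 i)
    have h2 : 0 ≤ C * (Y / logp Y) := mul_nonneg hC (div_nonneg hY.le (logp_pos Y).le)
    nlinarith
  exact ⟨summable_of_sum_le hterm hfin, Real.tsum_le_of_sum_le hterm hfin⟩

/-- The indicator function of the primes. -/
noncomputable def prI (n : ℕ) : ℝ := if n.Prime then 1 else 0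

lemma prI_nonneg (n : ℕ) : 0 ≤ prI n := by unfold prI; split_ifs <;> norm_num

lemma logp_of_one_le {x : ℝ} (hx : 1 ≤ x) : logp x = 1 + Real.log x := by
  rw [logp, max_eq_right (Real.log_nonneg hx)]

lemma log_sqrt_le {x : ℝ} (hx : 1 ≤ x) : Real.log √x ≤ √x :=
  (Real.log_le_sub_one_of_pos (Real.sqrt_pos.mpr (by linarith))).trans (by linarith)

lemma sum_prI (x : ℝ) : ∑ n ∈ Finset.range (⌊x⌋₊ + 1), prI n = Nat.primeCounting ⌊x⌋₊ := by
  rw [Nat.primeCounting, Nat.primeCounting', Nat.count_eq_card_filter_range, Finset.card_filter]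
  push_cast; rfl

lemma sum_prI_le (x : ℝ) (hx : 0 < x) :
    ∑ n ∈ Finset.range (⌊x⌋₊ + 1), prI n ≤ 8 * (x / logp x) := by
  rw [mul_div_assoc', le_div_iff₀ (logp_pos x), sum_prI]
  rcases lt_or_ge x 1 with h | h
  · rw [Nat.floor_eq_zero.mpr h]; simp; positivity
  · have h1 : (Nat.primeCounting ⌊x⌋₊ : ℝ) * Real.log √x ≤ Real.log 4 * x + √x * Real.log √x := by
      rcases h.eq_or_lt with rfl | h'
      · simpa using Real.log_nonneg (by norm_num)
      have h0 := Chebyshev.pi_le_log4_mul_div h'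
      have hpos : 0 < Real.log √x := Real.log_pos (Real.lt_sqrt_of_sq_lt (by simpa using h'))
      calc _ ≤ (Real.log 4 * x / Real.log √x + √x) * Real.log √x := by gcongr
        _ = _ := by field_simp
    have h2 : (Nat.primeCounting ⌊x⌋₊ : ℝ) ≤ 2 * x := by
      have h3 : (Nat.primeCounting ⌊x⌋₊ : ℝ) ≤ (⌊x⌋₊ : ℝ) + 1 := by
        exact_mod_cast Nat.count_le (p := Nat.Prime)
      linarith [Nat.floor_le hx.le]
    have h3 : Real.log √x = Real.log x / 2 := Real.log_sqrt hx.le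
    have h4 : Real.log 4 ≤ 2 := by
      have : Real.log 4 = 2 * Real.log 2 := by
        rw [show (4 : ℝ) = 2 ^ 2 by norm_num, Real.log_pow]; norm_num
      linarith [Real.log_two_lt_d9]
    have h5 : √x * Real.log √x ≤ x := by
      calc √x * Real.log √x ≤ √x * √x := by gcongr; exact log_sqrt_le h
        _ = x := Real.mul_self_sqrt hx.le
    have h6 : Real.log 4 * x ≤ 2 * x := by gcongr
    rw [logp_of_one_le h]
    nlinarith

/-- The contribution of the proper prime powers to the von Mangoldt function. -/
noncomputable def propPow (n : ℕ) : ℝ := vonMangoldt n - prI n * Real.log n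

lemma propPow_nonneg (n : ℕ) : 0 ≤ propPow n := by
  unfold propPow prI
  split_ifs with h
  · rw [vonMangoldt_apply_prime h]; simp
  · simp

/-- The sum is `ψ(x) - θ(x) = O(√x)`. -/
lemma sum_propPow_le : ∃ C, 0 ≤ C ∧ ∀ x : ℝ, 0 < x →
    ∑ n ∈ Finset.range (⌊x⌋₊ + 1), propPow n ≤ C * (x / logp x) := by
  obtain ⟨C, hC⟩ := Chebyshev.psi_sub_theta_le_mul_sqrt
  refine ⟨3 * |C|, by positivity, fun x hx => ?_⟩
  have e : ∑ n ∈ Finset.range (⌊x⌋₊ + 1), propPow n = Chebyshev.psi x - Chebyshev.theta x := by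
    rw [Chebyshev.psi_eq_sum_Icc, Chebyshev.theta_eq_sum_Icc, Finset.sum_filter,
      ← Finset.sum_sub_distrib, Finset.range_eq_Ico]
    refine Finset.sum_congr (by ext; simp) fun n _ => ?_
    unfold propPow prI
    split_ifs <;> simp
  rw [e, mul_div_assoc', le_div_iff₀ (logp_pos x)]
  rcases lt_or_ge x 1 with h | h
  · rw [Chebyshev.psi_eq_zero_of_le_one h.le, Chebyshev.theta_eq_zero_of_le_one h.le]
    simp; positivity
  · have h3 : Real.log √x = Real.log x / 2 := Real.log_sqrt hx.le
    have h5 := log_sqrt_le h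
    have h6 : 1 ≤ √x := Real.one_le_sqrt.mpr h
    rw [logp_of_one_le h]
    have h7 := Real.mul_self_sqrt hx.le
    have h8 : Chebyshev.psi x - Chebyshev.theta x ≤ |C| * √x :=
      (hC x).trans (by gcongr; exact le_abs_self C)
    calc _ ≤ (|C| * √x) * (1 + Real.log x) := by
          have := Real.log_nonneg h
          gcongr
      _ ≤ (|C| * √x) * (3 * √x) := by gcongr; linarith
      _ = 3 * |C| * x := by linear_combination 3 * |C| * h7

/-- The kernel `u^N exp(-u^k)`. -/
noncomputable def wmon (k N : ℕ) (u : ℝ) : ℝ := u ^ N * Real.exp (-u ^ k)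

lemma wmon_eq (k N : ℕ) : wmon k N = wker k (X ^ N) := by
  ext u; simp [wmon, wker]

lemma wmon_nonneg (k N : ℕ) {u : ℝ} (hu : 0 ≤ u) : 0 ≤ wmon k N u := by
  unfold wmon; positivity

lemma wmon_bound {k : ℕ} (hk : 1 ≤ k) (N : ℕ) : ∃ K, 0 ≤ K ∧ ∀ u, 0 < u →
    (1 + |Real.log u|) * wmon k N u * √u ≤ K ∧ (1 + |Real.log u|) * wmon k N u * u ^ 2 ≤ K := by
  refine ⟨4 * (N.factorial + (N + 1).factorial + (N + 2).factorial + (N + 3).factorial),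
    by positivity, fun u hu => ?_⟩
  have b0 := pow_mul_exp_neg_le hk N hu.le
  have b1 := pow_mul_exp_neg_le hk (N + 1) hu.le
  have b2 := pow_mul_exp_neg_le hk (N + 2) hu.le
  have b3 := pow_mul_exp_neg_le hk (N + 3) hu.le
  have hw := wmon_nonneg k N hu.le
  have e1 : u ^ (N + 1) * Real.exp (-u ^ k) = u * wmon k N u := by unfold wmon; ring
  have e2 : u ^ (N + 2) * Real.exp (-u ^ k) = u ^ 2 * wmon k N u := by unfold wmon; ring
  have e3 : u ^ (N + 3) * Real.exp (-u ^ k) = u ^ 3 * wmon k N u := by unfold wmon; ring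
  rw [e1] at b1; rw [e2] at b2; rw [e3] at b3
  change wmon k N u ≤ _ at b0
  set s := √u with hs
  have hs0 : 0 < s := Real.sqrt_pos.mpr hu
  have hss : s * s = u := Real.mul_self_sqrt hu.le
  have hlog : |Real.log u| * s ≤ 2 + u * s := by
    have h2 : Real.log s = Real.log u / 2 := Real.log_sqrt hu.le
    have h3 := Real.log_le_sub_one_of_pos hu
    have h4 := Real.one_sub_inv_le_log_of_pos hs0
    have h5 : s⁻¹ * s = 1 := inv_mul_cancel₀ hs0.ne'
    have h6 : |Real.log u| ≤ u + 2 * s⁻¹ := by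
      have : 0 < s⁻¹ := by positivity
      rw [abs_le]; constructor <;> nlinarith
    calc _ ≤ (u + 2 * s⁻¹) * s := by gcongr
      _ = _ := by linear_combination 2 * h5
  have hs1 : s ≤ 1 + u := by nlinarith [sq_nonneg (s - 1)]
  have hA : (1 + |Real.log u|) * s ≤ 3 + 2 * u + u ^ 2 := by nlinarith
  have hB : (1 + |Real.log u|) * u ^ 2 ≤ (3 + 2 * u + u ^ 2) * (s * u) := by
    calc (1 + |Real.log u|) * u ^ 2 = ((1 + |Real.log u|) * s) * (s * u) := by rw [← hss]; ring
      _ ≤ _ := by gcongr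
  have hB2 : (1 + |Real.log u|) * u ^ 2 ≤ 4 * (u + u ^ 2 + u ^ 3) := by
    have h3 := Real.log_le_sub_one_of_pos hu
    have h6 : |Real.log u| * u ≤ 1 + u ^ 2 := by
      have h4 := Real.one_sub_inv_le_log_of_pos hu
      have h5 : u⁻¹ * u = 1 := inv_mul_cancel₀ hu.ne'
      have : 0 < u⁻¹ := by positivity
      have h6 : |Real.log u| ≤ u + u⁻¹ := by
        rw [abs_le]; constructor <;> nlinarith
      calc _ ≤ (u + u⁻¹) * u := by gcongr
        _ = _ := by linear_combination h5
    nlinarith [pow_pos hu 2, pow_pos hu 3]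
  constructor
  · have := mul_le_mul_of_nonneg_right hA hw
    nlinarith
  · have := mul_le_mul_of_nonneg_right hB2 hw
    nlinarith

/-- The prime number theorem for smoothed sums over the primes. In `smooth_pnt` the prime powers are
negligible, and `log p = log Y + log (p / Y)`, where the second term is absorbed by the kernel. -/
lemma smooth_pnt_primes {k : ℕ} (hk : 1 ≤ k) (N : ℕ) : ∃ C, 0 ≤ C ∧ ∀ Y : ℝ, 0 < Y →
    Summable (fun n : ℕ => prI n * wmon k N (n / Y)) ∧
    ∑' n : ℕ, prI n * wmon k N (n / Y) ≤ C * (Y / logp Y) ∧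
    |Real.log Y * (∑' n : ℕ, prI n * wmon k N (n / Y)) - Y * ∫ u in Ioi 0, wmon k N u| ≤
      C * (Y / logp Y) := by
  obtain ⟨C0, h0⟩ := smooth_pnt hk (X ^ N)
  rw [← wmon_eq] at h0
  obtain ⟨K, hK, hw⟩ := wmon_bound hk N
  obtain ⟨A, hA, hpp⟩ := sum_propPow_le
  obtain ⟨C1, hC1, h1⟩ := dyadic prI_nonneg (by simp [prI, Nat.not_prime_zero]) (by norm_num) sum_prI_le hK
  obtain ⟨C2, hC2, h2⟩ := dyadic propPow_nonneg (by simp [propPow, prI, Nat.not_prime_zero]) hA hpp hK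
  have hwle : ∀ u, 0 < u → wmon k N u ≤ (1 + |Real.log u|) * wmon k N u := fun u hu => by
    have := mul_nonneg (abs_nonneg (Real.log u)) (wmon_nonneg k N hu.le)
    linarith
  have hV1 : ∀ u, 0 < u → wmon k N u * √u ≤ K := fun u hu =>
    le_trans (by gcongr; exact hwle u hu) (hw u hu).1
  have hV2 : ∀ u, 0 < u → wmon k N u * u ^ 2 ≤ K := fun u hu =>
    le_trans (by gcongr; exact hwle u hu) (hw u hu).2
  refine ⟨|C0| + C1 + C2, by positivity, fun Y hY => ?_⟩
  obtain ⟨s1, b1⟩ := h1 (wmon k N) (fun u hu => wmon_nonneg k N hu) hV1 hV2 Y hY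
  obtain ⟨s2, b2⟩ := h1 (fun u => (1 + |Real.log u|) * wmon k N u)
    (fun u hu => mul_nonneg (by positivity) (wmon_nonneg k N hu)) (fun u hu => (hw u hu).1)
    (fun u hu => (hw u hu).2) Y hY
  obtain ⟨s3, b3⟩ := h2 (wmon k N) (fun u hu => wmon_nonneg k N hu) hV1 hV2 Y hY
  have hYl : 0 ≤ Y / logp Y := div_nonneg hY.le (logp_pos Y).le
  refine ⟨s1, b1.trans ?_, ?_⟩
  · gcongr; linarith [abs_nonneg C0]
  have hb : ∀ n : ℕ, ‖prI n * Real.log (n / Y) * wmon k N (n / Y)‖ ≤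
      prI n * ((1 + |Real.log (n / Y)|) * wmon k N (n / Y)) := by
    intro n
    have hw0 : 0 ≤ wmon k N (n / Y) := wmon_nonneg k N (by positivity)
    rw [Real.norm_eq_abs, abs_mul, abs_mul, abs_of_nonneg (prI_nonneg n), abs_of_nonneg hw0, mul_assoc]
    have := prI_nonneg n
    gcongr
    linarith
  have s4 : Summable fun n : ℕ => prI n * Real.log (n / Y) * wmon k N (n / Y) := s2.of_norm_bounded hb
  have b4 : |∑' n : ℕ, prI n * Real.log (n / Y) * wmon k N (n / Y)| ≤ C1 * (Y / logp Y) := by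
    refine le_trans ?_ b2
    exact tsum_of_norm_bounded s2.hasSum hb
  have e : (∑' n : ℕ, vonMangoldt n * wmon k N (n / Y)) =
      (∑' n : ℕ, propPow n * wmon k N (n / Y)) + (Real.log Y * (∑' n : ℕ, prI n * wmon k N (n / Y)) +
        ∑' n : ℕ, prI n * Real.log (n / Y) * wmon k N (n / Y)) := by
    rw [← tsum_mul_left, ← (s1.mul_left _).tsum_add s4, ← s3.tsum_add ((s1.mul_left _).add s4)]
    congr 1; ext n
    rcases Nat.eq_zero_or_pos n with rfl | hn
    · simp [propPow, prI, Nat.not_prime_zero]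
    · have hn0 : (n : ℝ) ≠ 0 := by exact_mod_cast hn.ne'
      rw [Real.log_div hn0 hY.ne', propPow]; ring
  have h3 := h0 Y hY
  rw [e] at h3
  have b5 : 0 ≤ ∑' n : ℕ, propPow n * wmon k N (n / Y) :=
    tsum_nonneg fun n => mul_nonneg (propPow_nonneg n) (wmon_nonneg k N (by positivity))
  have h4 : C0 * (Y / logp Y) ≤ |C0| * (Y / logp Y) := by gcongr; exact le_abs_self _
  rw [abs_le] at h3 b4 ⊢
  constructor <;> linarith [h3.1, h3.2, b4.1, b4.2]

end

/-! ### Asymptotics of `Φ_{(m)}` near `ρ = 1` -/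

section

open MeasureTheory Set Topology Polynomial ArithmeticFunction

/-- The smoothed sum `∑_p w(p / Y)` over the primes, with `w(u) = u^N exp(-u^k)`. -/
noncomputable def psum (k N : ℕ) (Y : ℝ) : ℝ := ∑' n : ℕ, prI n * wmon k N (n / Y)

lemma psum_eq (k N : ℕ) (Y : ℝ) : psum k N Y = ∑' p : Nat.Primes, wmon k N ((p : ℕ) / Y) := by
  have h := tsum_subtype {n : ℕ | n.Prime} (fun n : ℕ => wmon k N (n / Y))
  rw [psum]
  refine Eq.trans ?_ h.symm
  congr 1; ext n
  by_cases hn : n.Prime <;> simp [prI, hn, Set.indicator]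

/-- The rescaled parameter `Y j^{-1/k}` belonging to the exponent `j`. -/
noncomputable def Yj (k : ℕ) (Y : ℝ) (j : ℕ+) : ℝ := (j : ℝ) ^ (-(1 / (k : ℝ))) * Y

lemma one_le_pnat (j : ℕ+) : (1 : ℝ) ≤ j := by exact_mod_cast one_le (a := j)

lemma Yj_pos (k : ℕ) {Y : ℝ} (hY : 0 < Y) (j : ℕ+) : 0 < Yj k Y j := by
  have := one_le_pnat j
  unfold Yj; positivity

lemma Yj_pow {k : ℕ} (hk : 1 ≤ k) {Y : ℝ} (j : ℕ+) : Yj k Y j ^ k = Y ^ k / j := by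
  have hj := one_le_pnat j
  have hk0 : (k : ℝ) ≠ 0 := by positivity
  rw [Yj, mul_pow, ← Real.rpow_mul_natCast (by linarith)]
  have : -(1 / (k : ℝ)) * k = -1 := by field_simp
  rw [this, Real.rpow_neg_one]; ring

lemma Phim_eq {k : ℕ} (hk : 1 ≤ k) (m : ℕ) {Y : ℝ} (hY : 0 < Y) :
    Phim k m (Real.exp (-(1 / Y ^ k))) =
      Y ^ (k * m) * ∑' j : ℕ+, (1 / (j : ℝ)) * psum k (k * m) (Yj k Y j) := by
  rw [Phim, ← tsum_mul_left]
  congr 1; ext j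
  rw [psum_eq, ← tsum_mul_left, ← tsum_mul_left]
  congr 1; ext p
  have hj := one_le_pnat j
  have hYj := Yj_pos k hY j
  have hj0 : (j : ℝ) ≠ 0 := by linarith
  have e1 : (((p : ℕ) : ℝ) / Yj k Y j) ^ k = ((p : ℕ) : ℝ) ^ k / (Y ^ k / j) := by
    rw [div_pow, Yj_pow hk]
  have e2 : ((((j : ℕ) * (p : ℕ) ^ k : ℕ) : ℝ) * -(1 / Y ^ k)) =
      -(((p : ℕ) : ℝ) ^ k / (Y ^ k / (j : ℝ))) := by
    push_cast; field_simp
  rw [wmon, pow_mul (((p : ℕ) : ℝ) / Yj k Y j), e1, ← Real.exp_nat_mul, e2, zpow_sub_one₀ hj0,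
    zpow_natCast, pow_mul, pow_mul]
  field_simp
  rw [div_pow, mul_pow]
  field_simp

lemma summable_log_sq {k : ℕ} (hk : 1 ≤ k) :
    Summable fun j : ℕ+ => (j : ℝ) ^ (-(1 + 1 / (k : ℝ))) * (1 + Real.log j) ^ 2 := by
  have hk0 : (0 : ℝ) < k := by positivity
  have h1 : Summable fun n : ℕ => (n : ℝ) ^ (-(1 + 1 / (2 * k : ℝ))) := by
    rw [Real.summable_nat_rpow]
    have : 0 < 1 / (2 * k : ℝ) := by positivity
    linarith
  have h2 := (h1.comp_injective PNat.coe_injective).mul_left ((1 + 4 * (k : ℝ)) ^ 2)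
  refine Summable.of_nonneg_of_le (fun j => ?_) (fun j => ?_) h2
  · have := one_le_pnat j; positivity
  · have hj := one_le_pnat j
    have hj0 : (0 : ℝ) < j := by linarith
    have h3 : 1 + Real.log j ≤ (1 + 4 * k) * (j : ℝ) ^ (1 / (4 * k : ℝ)) := by
      have := Real.log_le_rpow_div hj0.le (ε := 1 / (4 * k : ℝ)) (by positivity)
      have h4 : (1 : ℝ) ≤ (j : ℝ) ^ (1 / (4 * k : ℝ)) := Real.one_le_rpow hj (by positivity)
      rw [div_div_eq_mul_div, div_one] at this
      linarith
    have h0 : 0 ≤ 1 + Real.log j := by linarith [Real.log_nonneg hj]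
    calc _ ≤ (j : ℝ) ^ (-(1 + 1 / (k : ℝ))) * ((1 + 4 * k) * (j : ℝ) ^ (1 / (4 * k : ℝ))) ^ 2 := by
          gcongr
      _ = (1 + 4 * k) ^ 2 * ((j : ℝ) ^ (-(1 + 1 / (k : ℝ))) * ((j : ℝ) ^ (1 / (4 * k : ℝ))) ^ 2) := by
          ring
      _ = _ := by
          congr 1
          rw [← Real.rpow_mul_natCast hj0.le, ← Real.rpow_add hj0]
          simp only [Function.comp]
          congr 1; push_cast; field_simp; ring

lemma zetaR_eq {k : ℕ} (hk : 1 ≤ k) :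
    (Summable fun j : ℕ+ => (j : ℝ) ^ (-(1 + 1 / (k : ℝ)))) ∧
    ∑' j : ℕ+, (j : ℝ) ^ (-(1 + 1 / (k : ℝ))) = zetaR (((k : ℝ) + 1) / k) := by
  have hk0 : (0 : ℝ) < k := by positivity
  have h1 : 1 < ((k : ℝ) + 1) / k := by rw [one_lt_div hk0]; linarith
  have h2 : 1 + 1 / (k : ℝ) = ((k : ℝ) + 1) / k := by field_simp
  rw [h2]
  set s := ((k : ℝ) + 1) / k
  have hs : Summable fun n : ℕ => (n : ℝ) ^ (-s) := by rw [Real.summable_nat_rpow]; linarith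
  refine ⟨hs.comp_injective PNat.coe_injective, ?_⟩
  rw [zetaR, zeta_eq_tsum_one_div_nat_add_one_cpow (by simpa using h1)]
  have e : ∀ n : ℕ, 1 / ((n : ℂ) + 1) ^ (s : ℂ) = (((n + 1 : ℕ) : ℝ) ^ (-s) : ℝ) := by
    intro n
    rw [Real.rpow_neg (by positivity), Complex.ofReal_inv, Complex.ofReal_cpow (by positivity)]
    push_cast; rw [one_div]
  simp_rw [e]
  rw [← Complex.ofReal_tsum, Complex.ofReal_re]
  exact tsum_pnat_eq_tsum_succ (f := fun n : ℕ => (n : ℝ) ^ (-s))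

/-- The behaviour of `Φ_{(m)}` near `ρ = 1`, in the parametrisation `ρ = exp(-Y^{-k})`: the terms with
a given `j` are a smoothed sum over primes at scale `Y j^{-1/k}`, and summation over `j` produces
`ζ(1 + 1/k)`. -/
lemma Phim_asymp {k : ℕ} (hk : 1 ≤ k) (m : ℕ) : ∃ C, 0 ≤ C ∧ ∀ Y : ℝ, 0 < Y → ∃ S : ℝ,
    Phim k m (Real.exp (-(1 / Y ^ k))) = Y ^ (k * m) * S ∧ S ≤ C * (Y / logp Y) ∧
    |Real.log Y * S - Y * (zetaR (((k : ℝ) + 1) / k) * ∫ u in Ioi 0, wmon k (k * m) u)| ≤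
      C * (Y / logp Y) := by
  obtain ⟨C, hC, h⟩ := smooth_pnt_primes hk (k * m)
  obtain ⟨hz1, hz2⟩ := zetaR_eq hk
  have hs := summable_log_sq hk
  set d : ℕ+ → ℝ := fun j => (j : ℝ) ^ (-(1 + 1 / (k : ℝ))) * (1 + Real.log j) ^ 2 with hd
  set c := ∫ u in Ioi 0, wmon k (k * m) u with hc
  have hd0 : ∀ j, 0 ≤ d j := fun j => by have := one_le_pnat j; positivity
  refine ⟨C * ∑' j, d j, mul_nonneg hC (tsum_nonneg hd0), fun Y hY => ?_⟩
  have hYl : 0 ≤ Y / logp Y := div_nonneg hY.le (logp_pos Y).le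
  have hk0 : (0 : ℝ) < k := by positivity
  have hk1 : (1 : ℝ) ≤ k := by exact_mod_cast hk
  have hjY : ∀ j : ℕ+, (1 / (j : ℝ)) * Yj k Y j = (j : ℝ) ^ (-(1 + 1 / (k : ℝ))) * Y := by
    intro j
    have hj0 : (0 : ℝ) < j := by linarith [one_le_pnat j]
    rw [Yj, ← mul_assoc, neg_add, Real.rpow_add hj0, Real.rpow_neg_one, one_div]
  have hjl : ∀ j : ℕ+, (1 / (j : ℝ)) * (1 + Real.log j) * (Yj k Y j / logp (Yj k Y j)) ≤
      d j * (Y / logp Y) := by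
    intro j
    have hj := one_le_pnat j
    have hj0 : (0 : ℝ) < j := by linarith
    have hl0 := Real.log_nonneg hj
    have h1 := logp_mul_le (l := (j : ℝ) ^ (-(1 / (k : ℝ)))) (by positivity) hY
    have h2 : logp (1 / (j : ℝ) ^ (-(1 / (k : ℝ)))) ≤ 1 + Real.log j := by
      rw [Real.rpow_neg hj0.le, one_div, inv_inv, logp, Real.log_rpow hj0]
      gcongr
      refine max_le hl0 ?_
      have : 1 / (k : ℝ) ≤ 1 := by rw [div_le_one hk0]; exact hk1
      nlinarith
    have h3 : logp Y ≤ logp (Yj k Y j) * (1 + Real.log j) := by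
      refine h1.trans ?_
      rw [Yj]; have := logp_pos ((j : ℝ) ^ (-(1 / (k : ℝ))) * Y); gcongr
    have hp := logp_pos (Yj k Y j)
    have hp' := logp_pos Y
    have h4 : 1 / logp (Yj k Y j) ≤ (1 + Real.log j) / logp Y := by
      rw [div_le_div_iff₀ hp hp']; linarith
    calc _ = ((1 / (j : ℝ)) * Yj k Y j) * (1 + Real.log j) * (1 / logp (Yj k Y j)) := by ring
      _ ≤ ((1 / (j : ℝ)) * Yj k Y j) * (1 + Real.log j) * ((1 + Real.log j) / logp Y) := by
          have := (Yj_pos k hY j).le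
          gcongr
      _ = _ := by rw [hjY, hd]; ring
  have hT : ∀ j, 0 ≤ psum k (k * m) (Yj k Y j) := fun j =>
    tsum_nonneg fun n => mul_nonneg (prI_nonneg n)
      (wmon_nonneg _ _ (div_nonneg (by positivity) (Yj_pos k hY j).le))
  have hb1 : ∀ j : ℕ+, (1 / (j : ℝ)) * psum k (k * m) (Yj k Y j) ≤ d j * (C * (Y / logp Y)) := by
    intro j
    obtain ⟨-, h1, -⟩ := h (Yj k Y j) (Yj_pos k hY j)
    have hj := one_le_pnat j
    have hl0 := Real.log_nonneg hj
    have hq : 0 ≤ Yj k Y j / logp (Yj k Y j) := div_nonneg (Yj_pos k hY j).le (logp_pos _).le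
    calc _ ≤ (1 / (j : ℝ)) * (C * (Yj k Y j / logp (Yj k Y j))) := by gcongr; exact h1
      _ ≤ (1 / (j : ℝ)) * (1 + Real.log j) * (C * (Yj k Y j / logp (Yj k Y j))) := by
          gcongr ?_ * _
          exact le_mul_of_one_le_right (by positivity) (by linarith)
      _ = C * ((1 / (j : ℝ)) * (1 + Real.log j) * (Yj k Y j / logp (Yj k Y j))) := by ring
      _ ≤ C * (d j * (Y / logp Y)) := mul_le_mul_of_nonneg_left (hjl j) hC
      _ = _ := by ring
  have hsd := hs.mul_right (C * (Y / logp Y))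
  have hsS : Summable fun j : ℕ+ => (1 / (j : ℝ)) * psum k (k * m) (Yj k Y j) :=
    Summable.of_nonneg_of_le (fun j => mul_nonneg (by positivity) (hT j)) hb1 hsd
  refine ⟨_, Phim_eq hk m hY, ?_, ?_⟩
  · refine (hsS.tsum_le_tsum hb1 hsd).trans (le_of_eq ?_)
    rw [tsum_mul_right]; ring
  · have e : Real.log Y * (∑' j : ℕ+, (1 / (j : ℝ)) * psum k (k * m) (Yj k Y j)) -
        Y * (zetaR (((k : ℝ) + 1) / k) * c) = ∑' j : ℕ+, (1 / (j : ℝ)) *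
          (Real.log Y * psum k (k * m) (Yj k Y j) - Yj k Y j * c) := by
      rw [← hz2, ← tsum_mul_left, ← tsum_mul_right, ← tsum_mul_left,
        ← (hsS.mul_left _).tsum_sub ((hz1.mul_right _).mul_left _)]
      congr 1; ext j
      linear_combination c * hjY j
    rw [e]
    have hle : ∀ j : ℕ+, ‖(1 / (j : ℝ)) * (Real.log Y * psum k (k * m) (Yj k Y j) - Yj k Y j * c)‖ ≤
        d j * (C * (Y / logp Y)) := by
      intro j
      obtain ⟨-, h1, h2⟩ := h (Yj k Y j) (Yj_pos k hY j)
      have hj := one_le_pnat j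
      have hj0 : (0 : ℝ) < j := by linarith
      have hl0 := Real.log_nonneg hj
      have hq : 0 ≤ Yj k Y j / logp (Yj k Y j) := div_nonneg (Yj_pos k hY j).le (logp_pos _).le
      have hlog : Real.log Y = Real.log (Yj k Y j) + 1 / (k : ℝ) * Real.log j := by
        rw [Yj, Real.log_mul (by positivity) hY.ne', Real.log_rpow hj0]; ring
      have h3 : |Real.log Y * psum k (k * m) (Yj k Y j) - Yj k Y j * c| ≤
          (1 + Real.log j) * (C * (Yj k Y j / logp (Yj k Y j))) := by
        rw [hlog]
        have h4 : 1 / (k : ℝ) * Real.log j * psum k (k * m) (Yj k Y j) ≤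
            Real.log j * (C * (Yj k Y j / logp (Yj k Y j))) := by
          have : 1 / (k : ℝ) ≤ 1 := by rw [div_le_one hk0]; exact hk1
          have h6 : 1 / (k : ℝ) * Real.log j ≤ Real.log j := by nlinarith
          exact mul_le_mul h6 h1 (hT j) hl0
        have h5 : 0 ≤ 1 / (k : ℝ) * Real.log j * psum k (k * m) (Yj k Y j) :=
          mul_nonneg (by positivity) (hT j)
        change |Real.log (Yj k Y j) * psum k (k * m) (Yj k Y j) - Yj k Y j * c| ≤ _ at h2
        rw [abs_le] at h2 ⊢
        constructor <;> nlinarith [h2.1, h2.2]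
      rw [norm_mul, Real.norm_of_nonneg (by positivity), Real.norm_eq_abs]
      calc _ ≤ (1 / (j : ℝ)) * ((1 + Real.log j) * (C * (Yj k Y j / logp (Yj k Y j)))) := by gcongr
        _ = C * ((1 / (j : ℝ)) * (1 + Real.log j) * (Yj k Y j / logp (Yj k Y j))) := by ring
        _ ≤ C * (d j * (Y / logp Y)) := mul_le_mul_of_nonneg_left (hjl j) hC
        _ = _ := by ring
    refine (tsum_of_norm_bounded hsd.hasSum hle).trans (le_of_eq ?_)
    rw [tsum_mul_right]; ring

lemma integral_wmon_zero {k : ℕ} (hk : 1 ≤ k) :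
    ∫ u in Ioi 0, wmon k (k * 0) u = Real.Gamma (((k : ℝ) + 1) / k) := by
  have hk0 : (0 : ℝ) < k := by positivity
  have h := integral_rpow_mul_exp_neg_rpow (p := k) (q := 0) hk0 (by norm_num)
  have e : ((k : ℝ) + 1) / k = 1 / k + 1 := by field_simp; ring
  rw [e, Real.Gamma_add_one (by positivity)]
  simpa [wmon] using h

lemma integral_wmon_one {k : ℕ} (hk : 1 ≤ k) :
    ∫ u in Ioi 0, wmon k (k * 1) u = Real.Gamma (((k : ℝ) + 1) / k) / k := by
  have hk0 : (0 : ℝ) < k := by positivity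
  have h := integral_rpow_mul_exp_neg_rpow (p := k) (q := k) hk0 (by linarith)
  rw [div_eq_inv_mul]
  simpa [wmon] using h

end

/-! ### Inversion -/

section

open MeasureTheory Set Topology Asymptotics

lemma abs_log_one_add_sub_le {d : ℝ} (hd : |d| ≤ 1 / 2) : |Real.log (1 + d) - d| ≤ 2 * d ^ 2 := by
  have hd' := abs_le.mp hd
  have hpos : 0 < 1 + d := by linarith
  have h1 := Real.log_le_sub_one_of_pos hpos
  have h2 := Real.one_sub_inv_le_log_of_pos hpos
  have h3 : (1 + d)⁻¹ ≤ 1 - d + 2 * d ^ 2 := by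
    rw [inv_le_iff_one_le_mul₀ hpos]
    nlinarith [sq_nonneg d]
  rw [abs_le]; constructor <;> nlinarith [sq_nonneg d]

/-- Inversion of `L = n ℓ - log ℓ + B + O(1/ℓ)`: here `log L - log (n ℓ) = -log L / L + O(1/L)`, so
that `exp D = 1 - κ log L / L + O(1/L)`. It is applied with `L = log x`, `ℓ = log Y`, `n = k + 1` and
`κ = k / (k + 1)`. -/
lemma exp_asymp {F : Filter ℝ} {l e0 e1 L D : ℝ → ℝ} {n κ B : ℝ} (hn : 0 < n)
    (hl : Tendsto l F atTop) (he0 : e0 =O[F] fun x => 1 / l x) (he1 : e1 =O[F] fun x => 1 / l x)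
    (hL : ∀ᶠ x in F, L x = n * l x - Real.log (l x) + B + e1 x)
    (hD : ∀ᶠ x in F, D x = e0 x - e1 x / n +
      κ * (Real.log (L x) - Real.log n - Real.log (l x))) :
    (fun x => Real.exp (D x) - 1 + κ * (Real.log (L x) / L x)) =O[F]
      fun x => 1 / L x := by
  have hlpos : ∀ᶠ x in F, 0 < l x := hl.eventually_gt_atTop 0
  set r : ℝ → ℝ := fun x => 1 / l x with hr
  -- a crude common bound for `1/ℓ` and `log ℓ / ℓ`, whose square is still `1/ℓ`
  set h : ℝ → ℝ := fun x => 1 / √(l x) with hh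
  set v : ℝ → ℝ := fun x => Real.log (l x) / l x with hv
  have hr0 : Tendsto r F (𝓝 0) := (tendsto_inv_atTop_zero.comp hl).congr fun x => by simp [hr]
  have hh0 : Tendsto h F (𝓝 0) :=
    (tendsto_inv_atTop_zero.comp (Real.tendsto_sqrt_atTop.comp hl)).congr fun x => by simp [hh]
  have hhh : (fun x => h x * h x) =O[F] r := by
    refine EventuallyEq.isBigO ?_
    filter_upwards [hlpos] with x hx
    simp only [hh, hr]
    rw [div_mul_div_comm, Real.mul_self_sqrt hx.le, one_mul]
  have hrh : r =O[F] h := by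
    refine IsBigO.trans (EventuallyEq.isBigO (f₂ := fun x => h x * h x) ?_) ?_
    · filter_upwards [hlpos] with x hx
      simp only [hh, hr]
      rw [div_mul_div_comm, Real.mul_self_sqrt hx.le, one_mul]
    · simpa using (hh0.isBigO_one ℝ).mul (isBigO_refl h F)
  have hvh : v =O[F] h := by
    refine IsBigO.of_bound 2 ?_
    filter_upwards [hl.eventually_ge_atTop 1] with x hx
    have h0 : 0 < l x := by linarith
    have hs : 0 < √(l x) := Real.sqrt_pos.mpr h0
    have h1 := log_sqrt_le hx
    rw [Real.log_sqrt h0.le] at h1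
    have h2 := Real.log_nonneg hx
    simp only [hv, hh]
    rw [Real.norm_of_nonneg (by positivity), Real.norm_of_nonneg (by positivity), div_le_iff₀ h0]
    have : 2 * (1 / √(l x)) * l x = 2 * √(l x) := by
      nth_rewrite 2 [← Real.mul_self_sqrt h0.le]
      field_simp
    rw [this]; linarith
  have he1' : e1 =O[F] fun _ => (1 : ℝ) := he1.trans (hr0.isBigO_one ℝ)
  -- the relative error of the approximation `L ≈ n ℓ`
  set d : ℝ → ℝ := fun x => L x / (n * l x) - 1 with hd
  have s1 : (fun x => d x + 1 / n * v x) =O[F] r := by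
    have h1 : (fun x => (B / n + 1 / n * e1 x) * r x) =O[F] fun x => (1 : ℝ) * r x := by
      refine IsBigO.mul ?_ (isBigO_refl r F)
      exact (isBigO_const_const _ one_ne_zero _).add (he1'.const_mul_left _)
    simp only [one_mul] at h1
    refine IsBigO.trans (EventuallyEq.isBigO ?_) h1
    filter_upwards [hlpos, hL] with x hx hx2
    simp only [hd, hv, hr, hx2]
    field_simp
    ring
  have s2 : d =O[F] h := by
    have := (s1.trans hrh).sub (hvh.const_mul_left (1 / n))
    refine IsBigO.trans (EventuallyEq.isBigO ?_) this
    exact Eventually.of_forall fun x => by simp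
  have hd0 : Tendsto d F (𝓝 0) := s2.trans_tendsto hh0
  have hdd : (fun x => d x * d x) =O[F] r := (s2.mul s2).trans hhh
  have hdsmall : ∀ᶠ x in F, |d x| ≤ 1 / 2 := by
    have := hd0.abs
    simp only [abs_zero] at this
    exact this.eventually_le_const (by norm_num)
  have hLd : ∀ᶠ x in F, L x = n * l x * (1 + d x) := by
    filter_upwards [hlpos] with x hx
    simp only [hd]; field_simp; ring
  set g : ℝ → ℝ := fun x => Real.log (1 + d x) with hg
  have s3 : (fun x => g x - d x) =O[F] r := by
    refine IsBigO.trans (IsBigO.of_bound 2 ?_) hdd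
    filter_upwards [hdsmall] with x hx
    rw [Real.norm_eq_abs, Real.norm_of_nonneg (mul_self_nonneg _), ← sq]
    exact abs_log_one_add_sub_le hx
  have hlogL : ∀ᶠ x in F, Real.log (L x) = Real.log n + Real.log (l x) + g x := by
    filter_upwards [hlpos, hLd, hdsmall] with x hx h1 h2
    have : 0 < 1 + d x := by linarith [(abs_le.mp h2).1]
    rw [h1, Real.log_mul (by positivity) this.ne', Real.log_mul hn.ne' hx.ne']
  have s4 : (fun x => D x + κ * (1 / n * v x)) =O[F] r := by
    have := ((he0.sub (he1.const_mul_left (1 / n))).add (s3.const_mul_left κ)).add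
      (s1.const_mul_left κ)
    refine IsBigO.trans (EventuallyEq.isBigO ?_) this
    filter_upwards [hD, hlogL] with x h1 h2
    rw [h1, h2]; ring
  have s4' : D =O[F] h := by
    have := (s4.trans hrh).sub ((hvh.const_mul_left (1 / n)).const_mul_left κ)
    refine IsBigO.trans (EventuallyEq.isBigO ?_) this
    exact Eventually.of_forall fun x => by simp
  have hD0 : Tendsto D F (𝓝 0) := s4'.trans_tendsto hh0
  have s5 : (fun x => Real.exp (D x) - 1 - D x) =O[F] r := by
    refine IsBigO.trans (IsBigO.of_bound 1 ?_) ((s4'.mul s4').trans hhh)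
    have := hD0.abs
    simp only [abs_zero] at this
    filter_upwards [this.eventually_le_const one_pos] with x hx
    rw [Real.norm_eq_abs, Real.norm_of_nonneg (mul_self_nonneg _), ← sq, one_mul]
    exact Real.abs_exp_sub_one_sub_id_le hx
  have hinv : (fun x => (1 + d x)⁻¹) =O[F] fun _ => (1 : ℝ) := by
    have : Tendsto (fun x => (1 + d x)⁻¹) F (𝓝 (1 + 0)⁻¹) :=
      (hd0.const_add 1).inv₀ (by norm_num)
    exact this.isBigO_one ℝ
  have hg1 : g =O[F] fun _ => (1 : ℝ) := by
    have : Tendsto g F (𝓝 (Real.log (1 + 0))) :=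
      (hd0.const_add 1).log (by norm_num)
    exact this.isBigO_one ℝ
  have s6 : (fun x => Real.log (L x) / L x - 1 / n * v x) =O[F] r := by
    have a1 : (fun x => (1 / n * (Real.log n + g x)) * (1 + d x)⁻¹ * r x) =O[F]
        fun x => (1 : ℝ) * 1 * r x :=
      ((((isBigO_const_const _ one_ne_zero _).add hg1).const_mul_left _).mul hinv).mul
        (isBigO_refl r F)
    have a2 : (fun x => (1 / n * (v x * d x)) * (1 + d x)⁻¹) =O[F] fun x => r x * 1 :=
      ((((hvh.mul s2).trans hhh)).const_mul_left _).mul hinv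
    simp only [one_mul, mul_one] at a1 a2
    refine IsBigO.trans (EventuallyEq.isBigO ?_) (a1.sub a2)
    filter_upwards [hlpos, hLd, hdsmall, hlogL] with x hx h1 h2 h3
    have : 0 < 1 + d x := by linarith [(abs_le.mp h2).1]
    rw [h3, h1]
    simp only [hv, hr]
    field_simp
    ring
  have s7 : r =O[F] fun x => 1 / L x := by
    have a1 : (fun x => (n * (1 + d x)) * (1 / L x)) =O[F] fun x => (1 : ℝ) * (1 / L x) := by
      refine IsBigO.mul ?_ (isBigO_refl _ F)
      exact ((hd0.const_add 1).const_mul n).isBigO_one ℝ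
    simp only [one_mul] at a1
    refine IsBigO.trans (EventuallyEq.isBigO ?_) a1
    filter_upwards [hlpos, hLd, hdsmall] with x hx h1 h2
    have : 0 < 1 + d x := by linarith [(abs_le.mp h2).1]
    rw [h1]; simp only [hr]; field_simp
  refine IsBigO.trans (IsBigO.trans (EventuallyEq.isBigO ?_)
    ((s5.add s4).add (s6.const_mul_left κ))) s7
  refine Eventually.of_forall fun x => ?_
  ring

/-- If `log Y * S ≈ b Y`, then `log S ≈ log Y + log b - log log Y`, with an error `O(1 / log Y)`. -/
lemma log_of_asymp {C b Y S : ℝ} (hb : 0 < b) (hC : 0 ≤ C) (hl1 : 0 < Real.log Y)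
    (hl : 2 * C / b ≤ Real.log Y)
    (h : |Real.log Y * S - Y * b| ≤ C * (Y / logp Y)) (hY : 1 ≤ Y) :
    0 < S ∧ |Real.log S - (Real.log Y + Real.log b - Real.log (Real.log Y))| ≤
      (2 * C / b) * (1 / Real.log Y) := by
  have hY0 : 0 < Y := by linarith
  set l := Real.log Y with hldef
  set d := l * S / (Y * b) - 1 with hd
  have hS : S = Y * b / l * (1 + d) := by rw [hd]; field_simp; ring
  have hdl : |d| ≤ C / b / l := by
    have e : d = (l * S - Y * b) / (Y * b) := by rw [hd]; field_simp
    rw [e, abs_div, abs_of_pos (mul_pos hY0 hb), div_le_iff₀ (by positivity)]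
    refine h.trans ?_
    have : logp Y = 1 + l := logp_of_one_le hY
    rw [this]
    have h2 : Y / (1 + l) ≤ Y / l := div_le_div_of_nonneg_left hY0.le hl1 (by linarith)
    calc C * (Y / (1 + l)) ≤ C * (Y / l) := by gcongr
      _ = C / b / l * (Y * b) := by field_simp
  have hd2 : |d| ≤ 1 / 2 := by
    refine hdl.trans ?_
    rw [div_le_iff₀ hl1]
    have : 2 * C / b = 2 * (C / b) := by ring
    linarith
  have hd1 := abs_le.mp hd2
  have hpos : 0 < 1 + d := by linarith
  refine ⟨by rw [hS]; positivity, ?_⟩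
  have e : Real.log S - (l + Real.log b - Real.log l) = Real.log (1 + d) := by
    rw [hS, Real.log_mul (by positivity) hpos.ne', Real.log_div (by positivity) hl1.ne',
      Real.log_mul hY0.ne' hb.ne']
    ring
  rw [e]
  have h3 := abs_log_one_add_sub_le hd2
  have h4 : |Real.log (1 + d)| ≤ 2 * |d| := by
    have h5 : |Real.log (1 + d)| ≤ |Real.log (1 + d) - d| + |d| := by
      simpa using abs_add_le (Real.log (1 + d) - d) d
    have h6 : 2 * d ^ 2 ≤ |d| := by
      rw [← sq_abs]; nlinarith [abs_nonneg d]
    linarith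
  calc _ ≤ 2 * |d| := h4
    _ ≤ 2 * (C / b / l) := by gcongr
    _ = _ := by ring

end

section

open MeasureTheory Set Topology Asymptotics

/-- Proposition 1.3, equation (1.5): asymptotic for `Φ(ρ(x))`. -/
theorem stmt2 (k : ℕ) (hk : 1 ≤ k) (ρ : ℝ → ℝ)
    (hρ : ∀ x, ρ x ∈ Set.Ioo (0 : ℝ) 1)
    (hx : ∀ᶠ x : ℝ in atTop, Phim k 1 (ρ x) = x) :
    ∃ E : ℝ → ℝ, (E =O[atTop] fun x => 1 / Real.log x) ∧
      ∀ᶠ x : ℝ in atTop,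
        Phim k 0 (ρ x) =
          (k : ℝ) *
            ((((k : ℝ) + 1) / k * zetaR (((k : ℝ) + 1) / k) * Real.Gamma (((k : ℝ) + 1) / k) *
                x ^ ((1 : ℝ) / k) / Real.log x) ^ ((k : ℝ) / ((k : ℝ) + 1))) *
            (1 - (k : ℝ) / ((k : ℝ) + 1) * (Real.log (Real.log x) / Real.log x) + E x) := by
  have hk0 : (0 : ℝ) < k := by exact_mod_cast hk
  have hkn : k ≠ 0 := by omega
  obtain ⟨C0, hC0, H0⟩ := Phim_asymp hk 0
  obtain ⟨C1, hC1, H1⟩ := Phim_asymp hk 1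
  have hI0 := integral_wmon_zero (k := k) hk
  have hI1 := integral_wmon_one (k := k) hk
  rw [hI0] at H0
  rw [hI1] at H1
  have hZ : 0 < zetaR (((k : ℝ) + 1) / k) := by
    obtain ⟨hs, he⟩ := zetaR_eq hk
    rw [← he]
    exact hs.tsum_pos (fun j => by positivity) 1 (by simp)
  have hG : 0 < Real.Gamma (((k : ℝ) + 1) / k) := Real.Gamma_pos_of_pos (by positivity)
  set Z := zetaR (((k : ℝ) + 1) / k)
  set G := Real.Gamma (((k : ℝ) + 1) / k)
  set a := Z * G with ha
  have ha0 : 0 < a := mul_pos hZ hG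
  have ha1 : 0 < a / k := by positivity
  -- the scale `Y` for which `ρ = exp (-Y ^ (-k))`
  set Y : ℝ → ℝ := fun x => (-1 / Real.log (ρ x)) ^ ((1 : ℝ) / k) with hYdef
  have hlogρ : ∀ x, Real.log (ρ x) < 0 := fun x => Real.log_neg (hρ x).1 (hρ x).2
  have hY0 : ∀ x, 0 < Y x := fun x =>
    Real.rpow_pos_of_pos (div_pos_of_neg_of_neg (by norm_num) (hlogρ x)) _
  have hYρ : ∀ x, Real.exp (-(1 / Y x ^ k)) = ρ x := fun x => by
    have : Y x ^ k = -1 / Real.log (ρ x) := by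
      simp only [hYdef, one_div]
      exact Real.rpow_inv_natCast_pow (div_pos_of_neg_of_neg (by norm_num) (hlogρ x)).le hkn
    rw [this]
    have h := (hlogρ x).ne
    rw [show -(1 / (-1 / Real.log (ρ x))) = Real.log (ρ x) by field_simp, Real.exp_log (hρ x).1]
  choose! S0 hS0 using fun x => H0 (Y x) (hY0 x)
  choose! S1 hS1 using fun x => H1 (Y x) (hY0 x)
  simp only [hYρ, mul_zero, pow_zero, one_mul, mul_one] at hS0 hS1
  have hYx : ∀ᶠ x in atTop, x ≤ C1 * Y x ^ (k + 1) := by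
    filter_upwards [hx] with x hx
    obtain ⟨h1, h2, -⟩ := hS1 x
    have h3 : Y x / logp (Y x) ≤ Y x := div_le_self (hY0 x).le (one_le_logp _)
    have h4 := pow_pos (hY0 x) k
    calc x = Y x ^ k * S1 x := by rw [← h1, hx]
      _ ≤ Y x ^ k * (C1 * (Y x / logp (Y x))) := by gcongr
      _ ≤ Y x ^ k * (C1 * Y x) := by gcongr
      _ = _ := by ring
  have hYtop : Tendsto Y atTop atTop := by
    rw [tendsto_atTop]
    intro b
    filter_upwards [hYx, eventually_gt_atTop (C1 * (max b 0) ^ (k + 1))] with x h1 h2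
    by_contra hlt
    push Not at hlt
    have h3 : Y x ^ (k + 1) ≤ (max b 0) ^ (k + 1) :=
      pow_le_pow_left₀ (hY0 x).le (hlt.le.trans (le_max_left _ _)) _
    have h4 := mul_le_mul_of_nonneg_left h3 hC1
    linarith
  set l : ℝ → ℝ := fun x => Real.log (Y x) with hldef
  have hl : Tendsto l atTop atTop := Real.tendsto_log_atTop.comp hYtop
  set e0 : ℝ → ℝ := fun x => Real.log (S0 x) - (l x + Real.log a - Real.log (l x)) with he0def
  set e1 : ℝ → ℝ := fun x => Real.log (S1 x) - (l x + Real.log (a / k) - Real.log (l x))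
    with he1def
  have ev0 : ∀ᶠ x in atTop, 0 < S0 x ∧ |e0 x| ≤ (2 * C0 / a) * (1 / l x) := by
    filter_upwards [hl.eventually_gt_atTop 0, hl.eventually_ge_atTop (2 * C0 / a),
      hYtop.eventually_ge_atTop 1] with x h1 h2 h3
    exact log_of_asymp ha0 hC0 h1 h2 (hS0 x).2.2 h3
  have ev1 : ∀ᶠ x in atTop, 0 < S1 x ∧ |e1 x| ≤ (2 * C1 / (a / k)) * (1 / l x) := by
    filter_upwards [hl.eventually_gt_atTop 0, hl.eventually_ge_atTop (2 * C1 / (a / k)),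
      hYtop.eventually_ge_atTop 1] with x h1 h2 h3
    refine log_of_asymp ha1 hC1 h1 h2 ?_ h3
    have := (hS1 x).2.2
    rwa [← mul_div_assoc] at this
  have bO : ∀ {e : ℝ → ℝ} {K : ℝ}, (∀ᶠ x in atTop, |e x| ≤ K * (1 / l x)) →
      e =O[atTop] fun x => 1 / l x := by
    intro e K h
    refine IsBigO.of_bound K ?_
    filter_upwards [h, hl.eventually_gt_atTop 0] with x h1 h2
    rwa [Real.norm_eq_abs, Real.norm_of_nonneg (by positivity)]
  have hO0 : e0 =O[atTop] fun x => 1 / l x := bO (ev0.mono fun x h => h.2)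
  have hO1 : e1 =O[atTop] fun x => 1 / l x := bO (ev1.mono fun x h => h.2)
  have hL : ∀ᶠ x in atTop, Real.log x =
      ((k : ℝ) + 1) * l x - Real.log (l x) + Real.log (a / k) + e1 x := by
    filter_upwards [hx, ev1] with x h1 h2
    have h3 : x = Y x ^ k * S1 x := by rw [← (hS1 x).1, h1]
    have h4 : Real.log x = k * l x + Real.log (S1 x) := by
      conv_lhs => rw [h3]
      rw [Real.log_mul (pow_pos (hY0 x) k).ne' h2.1.ne', Real.log_pow]
    rw [h4, he1def]; ring
  set κ : ℝ := (k : ℝ) / ((k : ℝ) + 1) with hκ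
  set M : ℝ → ℝ := fun x => (k : ℝ) *
    ((((k : ℝ) + 1) / k * Z * G * x ^ ((1 : ℝ) / k) / Real.log x) ^ κ) with hM
  have hD := exp_asymp (F := atTop) (l := l) (e0 := e0) (e1 := e1) (L := Real.log)
    (D := fun x => e0 x - e1 x / ((k : ℝ) + 1) +
      κ * (Real.log (Real.log x) - Real.log ((k : ℝ) + 1) - Real.log (l x)))
    (κ := κ) (by positivity) hl hO0 hO1 hL (Eventually.of_forall fun x => rfl)
  refine ⟨_, hD, ?_⟩
  filter_upwards [eventually_gt_atTop 1, hL, ev0] with x h1 h2 h3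
  have hx0 : 0 < x := by linarith
  have hLx : 0 < Real.log x := Real.log_pos h1
  have hbase : 0 < ((k : ℝ) + 1) / k * Z * G * x ^ ((1 : ℝ) / k) / Real.log x := by positivity
  have hMpos : 0 < M x := by simp only [hM]; positivity
  have hlogM : Real.log (M x) = Real.log k + κ * (Real.log ((k : ℝ) + 1) - Real.log k +
      Real.log a + 1 / k * Real.log x - Real.log (Real.log x)) := by
    simp only [hM]
    rw [Real.log_mul hk0.ne' (Real.rpow_pos_of_pos hbase _).ne', Real.log_rpow hbase,
      Real.log_div (by positivity) hLx.ne', Real.log_mul (by positivity) (by positivity),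
      Real.log_rpow hx0, mul_assoc (((k : ℝ) + 1) / k), ← ha,
      Real.log_mul (by positivity) ha0.ne', Real.log_div (by positivity) hk0.ne']
  have hlogS : Real.log (S0 x) = Real.log (M x) + (e0 x - e1 x / ((k : ℝ) + 1) +
      κ * (Real.log (Real.log x) - Real.log ((k : ℝ) + 1) - Real.log (l x))) := by
    have e : Real.log (S0 x) = e0 x + (l x + Real.log a - Real.log (l x)) := by
      simp only [he0def]; ring
    have h2' : e1 x = Real.log x - (((k : ℝ) + 1) * l x - Real.log (l x) + Real.log (a / k)) := by
      linarith
    rw [e, hlogM, h2', Real.log_div ha0.ne' hk0.ne', hκ]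
    field_simp
    ring
  have hS : S0 x = M x * Real.exp (e0 x - e1 x / ((k : ℝ) + 1) +
      κ * (Real.log (Real.log x) - Real.log ((k : ℝ) + 1) - Real.log (l x))) := by
    rw [← Real.exp_log h3.1, hlogS, Real.exp_add, Real.exp_log hMpos]
  rw [(hS0 x).1, hS]
  simp only [hM]
  ring

end
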